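/- There exists a universal constant C_b > 0 (used in the penalty of VI-LCB-Game) such that for γ ∈ [1/2,1) and δ ∈ (0,1), with probability at least 1−δ over the dataset, the output of Algorithm VI-LCB-Game satisfies, entrywise over 𝒮: V_pe^− ≥ r^{μ*,ν₀} + γ·P^{μ*,ν₀}·V_pe^− − 2·β^{μ*,ν₀}, where μ* is the max-player policy from a fixed Nash equilibrium (μ*,ν*) of the true game, ν₀ is any deterministic policy with ν₀(s) attaining min_{ν_s∈Δ(ℬ)} Σ_{a,b} μ*(a|s)ν_s(b) Q_pe^−(s,a,b) for each s, and β^{μ*,ν₀}(s) = Σ_{a,b} μ*(a|s)ν₀(b|s)·β(s,a,b; V_pe^−). -/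

import Mathlib

open scoped BigOperators ENNReal Classical

noncomputable section

namespace ZSMG

variable {𝒮 𝒜 ℬ : Type} [Fintype 𝒮] [Fintype 𝒜] [Fintype ℬ]
  [DecidableEq 𝒮] [DecidableEq 𝒜] [DecidableEq ℬ]

/-- Expectation of `V : 𝒮 → ℝ` under the (sub)probability vector `p`. -/
def Pexp (p V : 𝒮 → ℝ) : ℝ := ∑ s', p s' * V s'

/-- Variance of `V` under `p`: `Var_p(V) = p(V∘V) − (pV)²`. -/
def varP (p V : 𝒮 → ℝ) : ℝ := Pexp p (fun s => V s * V s) - (Pexp p V) ^ 2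

/-- Payoff of mixed strategies `w, z` in the matrix game `M`. -/
def pay (M : 𝒜 → ℬ → ℝ) (w : 𝒜 → ℝ) (z : ℬ → ℝ) : ℝ :=
  ∑ a, ∑ b, w a * z b * M a b

/-- Value function associated with a Q-function: minimax value at each state. -/
def valQ (Q : 𝒮 → 𝒜 → ℬ → ℝ) (s : 𝒮) : ℝ :=
  ⨆ w : stdSimplex ℝ 𝒜, ⨅ z : stdSimplex ℝ ℬ, pay (Q s) w.1 z.1

/-- Sup norm over states. -/
def supNormS (f : 𝒮 → ℝ) : ℝ := ⨆ s, |f s|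

/-- Sup norm over state-action triples. -/
def supNormQ (f : 𝒮 → 𝒜 → ℬ → ℝ) : ℝ := ⨆ s, ⨆ a, ⨆ b, |f s a b|

/-- The Bernstein-style penalty `β(s,a,b;V)`; `n` is the count `N(s,a,b)` and
`p` is the row `P̂(·|s,a,b)` of the empirical kernel. -/
def penalty (γ δ Cb : ℝ) (N n : ℕ) (p V : 𝒮 → ℝ) : ℝ :=
  (if n = 0 then 1 / (1 - γ)
   else
     min
       (max (Real.sqrt (Cb * Real.log ((N : ℝ) / ((1 - γ) * δ)) * varP p V / (n : ℝ)))
         (2 * Cb * Real.log ((N : ℝ) / ((1 - γ) * δ)) / ((1 - γ) * (n : ℝ))))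
       (1 / (1 - γ))) + 4 / (N : ℝ)

/-- The pessimistic Bellman operator for the max-player. -/
def TpeMinus (γ δ Cb : ℝ) (N : ℕ) (n : 𝒮 → 𝒜 → ℬ → ℕ)
    (Ph : 𝒮 → 𝒜 → ℬ → 𝒮 → ℝ) (rh : 𝒮 → 𝒜 → ℬ → ℝ)
    (Q : 𝒮 → 𝒜 → ℬ → ℝ) : 𝒮 → 𝒜 → ℬ → ℝ := fun s a b =>
  max (rh s a b + γ * Pexp (Ph s a b) (valQ Q)
        - penalty γ δ Cb N (n s a b) (Ph s a b) (valQ Q)) 0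

/-- The pessimistic Bellman operator for the min-player. -/
def TpePlus (γ δ Cb : ℝ) (N : ℕ) (n : 𝒮 → 𝒜 → ℬ → ℕ)
    (Ph : 𝒮 → 𝒜 → ℬ → 𝒮 → ℝ) (rh : 𝒮 → 𝒜 → ℬ → ℝ)
    (Q : 𝒮 → 𝒜 → ℬ → ℝ) : 𝒮 → 𝒜 → ℬ → ℝ := fun s a b =>
  min (rh s a b + γ * Pexp (Ph s a b) (valQ Q)
        + penalty γ δ Cb N (n s a b) (Ph s a b) (valQ Q)) (1 / (1 - γ))

/-- Count `N(s,a,b)` of occurrences of `(s,a,b)` in the dataset `D`. -/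
def cnt {N : ℕ} (D : Fin N → 𝒮 × 𝒜 × ℬ × 𝒮) (s : 𝒮) (a : 𝒜) (b : ℬ) : ℕ :=
  (Finset.univ.filter fun i => (D i).1 = s ∧ (D i).2.1 = a ∧ (D i).2.2.1 = b).card

/-- Count of full transitions `(s,a,b,s')` in the dataset `D`. -/
def cntT {N : ℕ} (D : Fin N → 𝒮 × 𝒜 × ℬ × 𝒮) (s : 𝒮) (a : 𝒜) (b : ℬ) (s' : 𝒮) : ℕ :=
  (Finset.univ.filter fun i => D i = (s, a, b, s')).card

/-- Empirical transition kernel `P̂(·|s,a,b)` built from the dataset. -/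
def Phat {N : ℕ} (D : Fin N → 𝒮 × 𝒜 × ℬ × 𝒮) (s : 𝒮) (a : 𝒜) (b : ℬ) : 𝒮 → ℝ := fun s' =>
  if cnt D s a b = 0 then ((Fintype.card 𝒮 : ℝ))⁻¹
  else (cntT D s a b s' : ℝ) / (cnt D s a b : ℝ)

/-- Empirical reward `r̂` built from the dataset. -/
def rhat {N : ℕ} (r : 𝒮 → 𝒜 → ℬ → ℝ) (D : Fin N → 𝒮 × 𝒜 × ℬ × 𝒮)
    (s : 𝒮) (a : 𝒜) (b : ℬ) : ℝ :=
  if cnt D s a b = 0 then 0 else r s a b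

/-- Number of iterations `T = ⌈log(N/(1−γ))/log(1/γ)⌉` of VI-LCB-Game. -/
def Titer (γ : ℝ) (N : ℕ) : ℕ := ⌈Real.log ((N : ℝ) / (1 - γ)) / Real.log (1 / γ)⌉₊

/-- `Q_pe^− = Q⁻_T` produced by VI-LCB-Game on the dataset `D`. -/
def QpeMinus (γ δ Cb : ℝ) (r : 𝒮 → 𝒜 → ℬ → ℝ) {N : ℕ}
    (D : Fin N → 𝒮 × 𝒜 × ℬ × 𝒮) : 𝒮 → 𝒜 → ℬ → ℝ :=
  (TpeMinus γ δ Cb N (cnt D) (Phat D) (rhat r D))^[Titer γ N] (fun _ _ _ => 0)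

/-- `Q_pe^+ = Q⁺_T` produced by VI-LCB-Game on the dataset `D`. -/
def QpePlus (γ δ Cb : ℝ) (r : 𝒮 → 𝒜 → ℬ → ℝ) {N : ℕ}
    (D : Fin N → 𝒮 × 𝒜 × ℬ × 𝒮) : 𝒮 → 𝒜 → ℬ → ℝ :=
  (TpePlus γ δ Cb N (cnt D) (Phat D) (rhat r D))^[Titer γ N] (fun _ _ _ => 1 / (1 - γ))

/-- `(w,z)` is a (mixed) Nash equilibrium / saddle point of the matrix game `M`. -/
def IsMatrixNash (M : 𝒜 → ℬ → ℝ) (w : 𝒜 → ℝ) (z : ℬ → ℝ) : Prop :=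
  w ∈ stdSimplex ℝ 𝒜 ∧ z ∈ stdSimplex ℝ ℬ ∧
    (∀ w' ∈ stdSimplex ℝ 𝒜, pay M w' z ≤ pay M w z) ∧
    (∀ z' ∈ stdSimplex ℝ ℬ, pay M w z ≤ pay M w z')

/-- `μ` is a possible max-player output of the algorithm, given the final Q-estimate `Q`. -/
def IsOutputMax (Q : 𝒮 → 𝒜 → ℬ → ℝ) (μ : 𝒮 → 𝒜 → ℝ) : Prop :=
  ∀ s, ∃ z, IsMatrixNash (Q s) (μ s) z

/-- `ν` is a possible min-player output of the algorithm, given the final Q-estimate `Q`. -/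
def IsOutputMin (Q : 𝒮 → 𝒜 → ℬ → ℝ) (ν : 𝒮 → ℬ → ℝ) : Prop :=
  ∀ s, ∃ w, IsMatrixNash (Q s) w (ν s)

/-- `μ` is a stationary (Markov) policy. -/
def IsPolicy (μ : 𝒮 → 𝒜 → ℝ) : Prop := ∀ s, μ s ∈ stdSimplex ℝ 𝒜

/-- `P` is a probability transition kernel. -/
def IsKernel (P : 𝒮 → 𝒜 → ℬ → 𝒮 → ℝ) : Prop := ∀ s a b, P s a b ∈ stdSimplex ℝ 𝒮

/-- `r` is a reward function with values in `[0,1]`. -/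
def IsReward (r : 𝒮 → 𝒜 → ℬ → ℝ) : Prop := ∀ s a b, r s a b ∈ Set.Icc (0 : ℝ) 1

/-- `d` is a probability distribution over `𝒮 × 𝒜 × ℬ`. -/
def IsDist3 (d : 𝒮 → 𝒜 → ℬ → ℝ) : Prop :=
  (∀ s a b, 0 ≤ d s a b) ∧ (∑ s, ∑ a, ∑ b, d s a b) = 1

/-- Transition matrix `P^{μ,ν}` of the product policy `μ × ν`. -/
def Pmat (P : 𝒮 → 𝒜 → ℬ → 𝒮 → ℝ) (μ : 𝒮 → 𝒜 → ℝ) (ν : 𝒮 → ℬ → ℝ) :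
    Matrix 𝒮 𝒮 ℝ :=
  Matrix.of fun s s' => ∑ a, ∑ b, μ s a * ν s b * P s a b s'

/-- Reward vector `r^{μ,ν}` of the product policy `μ × ν`. -/
def rPol (r : 𝒮 → 𝒜 → ℬ → ℝ) (μ : 𝒮 → 𝒜 → ℝ) (ν : 𝒮 → ℬ → ℝ) : 𝒮 → ℝ :=
  fun s => ∑ a, ∑ b, μ s a * ν s b * r s a b

/-- Value function `V^{μ,ν} = (I − γP^{μ,ν})⁻¹ r^{μ,ν}`. -/
def Vpol (γ : ℝ) (P : 𝒮 → 𝒜 → ℬ → 𝒮 → ℝ) (r : 𝒮 → 𝒜 → ℬ → ℝ)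
    (μ : 𝒮 → 𝒜 → ℝ) (ν : 𝒮 → ℬ → ℝ) : 𝒮 → ℝ :=
  Matrix.mulVec ((1 : Matrix 𝒮 𝒮 ℝ) - γ • Pmat P μ ν)⁻¹ (rPol r μ ν)

/-- `V^{μ,⋆}(s) = min_ν V^{μ,ν}(s)`. -/
def VmuStar (γ : ℝ) (P : 𝒮 → 𝒜 → ℬ → 𝒮 → ℝ) (r : 𝒮 → 𝒜 → ℬ → ℝ)
    (μ : 𝒮 → 𝒜 → ℝ) : 𝒮 → ℝ := fun s =>
  ⨅ ν : {ν : 𝒮 → ℬ → ℝ // IsPolicy ν}, Vpol γ P r μ ν.1 s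

/-- `V^{⋆,ν}(s) = max_μ V^{μ,ν}(s)`. -/
def VstarNu (γ : ℝ) (P : 𝒮 → 𝒜 → ℬ → 𝒮 → ℝ) (r : 𝒮 → 𝒜 → ℬ → ℝ)
    (ν : 𝒮 → ℬ → ℝ) : 𝒮 → ℝ := fun s =>
  ⨆ μ : {μ : 𝒮 → 𝒜 → ℝ // IsPolicy μ}, Vpol γ P r μ.1 ν s

/-- `Q^{μ,ν}(s,a,b) = r(s,a,b) + γ P(·|s,a,b) V^{μ,ν}`. -/
def Qpol (γ : ℝ) (P : 𝒮 → 𝒜 → ℬ → 𝒮 → ℝ) (r : 𝒮 → 𝒜 → ℬ → ℝ)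
    (μ : 𝒮 → 𝒜 → ℝ) (ν : 𝒮 → ℬ → ℝ) : 𝒮 → 𝒜 → ℬ → ℝ := fun s a b =>
  r s a b + γ * Pexp (P s a b) (Vpol γ P r μ ν)

/-- `Q^{μ,⋆}(s,a,b) = min_ν Q^{μ,ν}(s,a,b)`. -/
def QmuStar (γ : ℝ) (P : 𝒮 → 𝒜 → ℬ → 𝒮 → ℝ) (r : 𝒮 → 𝒜 → ℬ → ℝ)
    (μ : 𝒮 → 𝒜 → ℝ) : 𝒮 → 𝒜 → ℬ → ℝ := fun s a b =>
  ⨅ ν : {ν : 𝒮 → ℬ → ℝ // IsPolicy ν}, Qpol γ P r μ ν.1 s a b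

/-- `Q^{⋆,ν}(s,a,b) = max_μ Q^{μ,ν}(s,a,b)`. -/
def QstarNu (γ : ℝ) (P : 𝒮 → 𝒜 → ℬ → 𝒮 → ℝ) (r : 𝒮 → 𝒜 → ℬ → ℝ)
    (ν : 𝒮 → ℬ → ℝ) : 𝒮 → 𝒜 → ℬ → ℝ := fun s a b =>
  ⨆ μ : {μ : 𝒮 → 𝒜 → ℝ // IsPolicy μ}, Qpol γ P r μ.1 ν s a b

/-- `(μs, νs)` is a Nash equilibrium of the Markov game. -/
def IsNashPair (γ : ℝ) (P : 𝒮 → 𝒜 → ℬ → 𝒮 → ℝ) (r : 𝒮 → 𝒜 → ℬ → ℝ)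
    (μs : 𝒮 → 𝒜 → ℝ) (νs : 𝒮 → ℬ → ℝ) : Prop :=
  IsPolicy μs ∧ IsPolicy νs ∧
    (∀ μ, IsPolicy μ → ∀ s, Vpol γ P r μ νs s ≤ Vpol γ P r μs νs s) ∧
    (∀ ν, IsPolicy ν → ∀ s, Vpol γ P r μs νs s ≤ Vpol γ P r μs ν s)

/-- `V(ρ) = Σ_s ρ(s) V(s)`. -/
def wAvg (ρ V : 𝒮 → ℝ) : ℝ := ∑ s, ρ s * V s

/-- Discounted occupancy measure `d^{μ,ν}(s;ρ) = (1−γ) ρᵀ(I−γP^{μ,ν})⁻¹`. -/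
def dOcc (γ : ℝ) (P : 𝒮 → 𝒜 → ℬ → 𝒮 → ℝ) (μ : 𝒮 → 𝒜 → ℝ) (ν : 𝒮 → ℬ → ℝ)
    (ρ : 𝒮 → ℝ) : 𝒮 → ℝ := fun s =>
  (1 - γ) * Matrix.vecMul ρ ((1 : Matrix 𝒮 𝒮 ℝ) - γ • Pmat P μ ν)⁻¹ s

/-- `d^{μ,ν}(s,a,b;ρ) = d^{μ,ν}(s;ρ) μ(a|s) ν(b|s)`. -/
def dOcc3 (γ : ℝ) (P : 𝒮 → 𝒜 → ℬ → 𝒮 → ℝ) (μ : 𝒮 → 𝒜 → ℝ) (ν : 𝒮 → ℬ → ℝ)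
    (ρ : 𝒮 → ℝ) : 𝒮 → 𝒜 → ℬ → ℝ := fun s a b =>
  dOcc γ P μ ν ρ s * μ s a * ν s b

/-- Clipped unilateral concentrability coefficient `C⋆_clipped` (in `ℝ≥0∞`;
note that in `ℝ≥0∞` one has `x/0 = ∞` for `x ≠ 0` and `0/0 = 0`, matching the
convention of the paper). -/
def clipCoeff (γ : ℝ) (P : 𝒮 → 𝒜 → ℬ → 𝒮 → ℝ) (ρ : 𝒮 → ℝ) (d : 𝒮 → 𝒜 → ℬ → ℝ)
    (μs : 𝒮 → 𝒜 → ℝ) (νs : 𝒮 → ℬ → ℝ) : ℝ≥0∞ :=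
  max
    (⨆ (μ : {μ : 𝒮 → 𝒜 → ℝ // IsPolicy μ}) (s : 𝒮) (a : 𝒜) (b : ℬ),
      ENNReal.ofReal
          (min (dOcc3 γ P μ.1 νs ρ s a b)
            ((Fintype.card 𝒮 * (Fintype.card 𝒜 + Fintype.card ℬ) : ℝ))⁻¹) /
        ENNReal.ofReal (d s a b))
    (⨆ (ν : {ν : 𝒮 → ℬ → ℝ // IsPolicy ν}) (s : 𝒮) (a : 𝒜) (b : ℬ),
      ENNReal.ofReal
          (min (dOcc3 γ P μs ν.1 ρ s a b)
            ((Fintype.card 𝒮 * (Fintype.card 𝒜 + Fintype.card ℬ) : ℝ))⁻¹) /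
        ENNReal.ofReal (d s a b))

/-- Probability weight of an individual dataset under `(d_b, P)`. -/
def dsWeight {N : ℕ} (d : 𝒮 → 𝒜 → ℬ → ℝ) (P : 𝒮 → 𝒜 → ℬ → 𝒮 → ℝ)
    (D : Fin N → 𝒮 × 𝒜 × ℬ × 𝒮) : ℝ :=
  ∏ i, d (D i).1 (D i).2.1 (D i).2.2.1 * P (D i).1 (D i).2.1 (D i).2.2.1 (D i).2.2.2

/-- Probability of an event over the offline dataset. -/
def dsProb {N : ℕ} (d : 𝒮 → 𝒜 → ℬ → ℝ) (P : 𝒮 → 𝒜 → ℬ → 𝒮 → ℝ)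
    (E : Set (Fin N → 𝒮 × 𝒜 × ℬ × 𝒮)) : ℝ :=
  ∑ D : Fin N → 𝒮 × 𝒜 × ℬ × 𝒮, E.indicator (dsWeight d P) D

/-- Expectation of a function of the offline dataset. -/
def dsExp {N : ℕ} (d : 𝒮 → 𝒜 → ℬ → ℝ) (P : 𝒮 → 𝒜 → ℬ → 𝒮 → ℝ)
    (g : (Fin N → 𝒮 × 𝒜 × ℬ × 𝒮) → ℝ) : ℝ :=
  ∑ D : Fin N → 𝒮 × 𝒜 × ℬ × 𝒮, dsWeight d P D * g D

/-- Dirac (deterministic) policy for the min-player. -/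
def diracB (f : 𝒮 → ℬ) : 𝒮 → ℬ → ℝ := fun s b => if b = f s then 1 else 0

/-- Binomial pmf. -/
def binomPMF (n : ℕ) (p : ℝ) (k : ℕ) : ℝ :=
  (n.choose k : ℝ) * p ^ k * (1 - p) ^ (n - k)

/-- Probability of a set of outcomes under a `Binomial(n,p)` distribution. -/
def binomProb (n : ℕ) (p : ℝ) (E : Set ℕ) : ℝ :=
  ∑ k ∈ Finset.range (n + 1), E.indicator (binomPMF n p) k

/-- Weight of an i.i.d. sample from a distribution on a finite set. -/
def iidWeight {𝒳 : Type} {N : ℕ} (d : 𝒳 → ℝ) (ω : Fin N → 𝒳) : ℝ := ∏ i, d (ω i)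

/-- Probability of an event for `N` i.i.d. draws from `d`. -/
def iidProb {𝒳 : Type} [Fintype 𝒳] {N : ℕ} (d : 𝒳 → ℝ) (E : Set (Fin N → 𝒳)) : ℝ :=
  ∑ ω : Fin N → 𝒳, E.indicator (iidWeight d) ω

/-- Number of occurrences of `x` in the sample `ω`. -/
def iidCount {𝒳 : Type} [DecidableEq 𝒳] {N : ℕ} (ω : Fin N → 𝒳) (x : 𝒳) : ℕ :=
  (Finset.univ.filter fun i => ω i = x).card

/-- Transition kernel of the hard instance `ℳ𝒢_θ`. -/
def hardP {S A B : ℕ} (θ : Fin A → ℝ) : Fin S → Fin A → Fin B → Fin S → ℝ :=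
  fun s a b s' =>
    if s.val = 0 ∧ b.val = 0 then
      θ a * (if s'.val = 0 then 1 else 0) + (1 - θ a) * (if s'.val = 1 then 1 else 0)
    else if s' = s then 1 else 0

/-- Reward of the hard instance: `r(s,a,b) = 1{s = 0}`. -/
def hardR {S A B : ℕ} : Fin S → Fin A → Fin B → ℝ := fun s _ _ => if s.val = 0 then 1 else 0

end ZSMG

set_option linter.unusedSectionVars false

namespace ZSMG

variable {𝒮 𝒜 ℬ : Type} [Fintype 𝒮] [Fintype 𝒜] [Fintype ℬ]
  [DecidableEq 𝒮] [DecidableEq 𝒜] [DecidableEq ℬ]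

/-! ### Expectation and variance under a probability vector -/

lemma Pexp_mono {p V W : 𝒮 → ℝ} (hp : p ∈ stdSimplex ℝ 𝒮) (h : ∀ s, V s ≤ W s) :
    Pexp p V ≤ Pexp p W :=
  Finset.sum_le_sum fun s _ => mul_le_mul_of_nonneg_left (h s) (hp.1 s)

lemma Pexp_add_const {p : 𝒮 → ℝ} (hp : p ∈ stdSimplex ℝ 𝒮) (V : 𝒮 → ℝ) (c : ℝ) :
    Pexp p (fun s => V s + c) = Pexp p V + c := by
  simp only [Pexp, mul_add, Finset.sum_add_distrib, ← Finset.sum_mul, hp.2, one_mul]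

lemma Pexp_const {p : 𝒮 → ℝ} (hp : p ∈ stdSimplex ℝ 𝒮) (c : ℝ) :
    Pexp p (fun _ => c) = c := by
  simp only [Pexp, ← Finset.sum_mul, hp.2, one_mul]

lemma Pexp_le {p V : 𝒮 → ℝ} {c : ℝ} (hp : p ∈ stdSimplex ℝ 𝒮) (h : ∀ s, V s ≤ c) :
    Pexp p V ≤ c :=
  (Pexp_mono hp h).trans_eq (Pexp_const hp c)

lemma le_Pexp {p V : 𝒮 → ℝ} {c : ℝ} (hp : p ∈ stdSimplex ℝ 𝒮) (h : ∀ s, c ≤ V s) :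
    c ≤ Pexp p V :=
  (Pexp_const hp c).symm.trans_le (Pexp_mono hp h)

lemma Pexp_sub (p V W : 𝒮 → ℝ) : Pexp p (fun s => V s - W s) = Pexp p V - Pexp p W := by
  simp only [Pexp, mul_sub, Finset.sum_sub_distrib]

/-- Second moment of `V` about `m`. -/
lemma Pexp_sq_sub {p : 𝒮 → ℝ} (hp : p ∈ stdSimplex ℝ 𝒮) (V : 𝒮 → ℝ) (m : ℝ) :
    Pexp p (fun s => (V s - m) ^ 2) = varP p V + (Pexp p V - m) ^ 2 := by
  have h : Pexp p (fun s => (V s - m) ^ 2)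
      = Pexp p (fun s => V s * V s) - 2 * m * Pexp p V + m ^ 2 * ∑ s, p s := by
    simp only [Pexp, Finset.mul_sum, ← Finset.sum_sub_distrib, ← Finset.sum_add_distrib]
    exact Finset.sum_congr rfl fun s _ => by ring
  rw [h, hp.2, varP]
  ring

lemma varP_nonneg {p : 𝒮 → ℝ} (hp : p ∈ stdSimplex ℝ 𝒮) (V : 𝒮 → ℝ) : 0 ≤ varP p V := by
  have h := Pexp_sq_sub hp V (Pexp p V)
  have h' : 0 ≤ Pexp p (fun s => (V s - Pexp p V) ^ 2) := le_Pexp hp fun s => sq_nonneg _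
  nlinarith

lemma varP_le_sq {p V : 𝒮 → ℝ} {H : ℝ} (hp : p ∈ stdSimplex ℝ 𝒮)
    (hV : ∀ s, V s ∈ Set.Icc 0 H) : varP p V ≤ H ^ 2 := by
  have h := Pexp_sq_sub hp V 0
  have h' : Pexp p (fun s => (V s - 0) ^ 2) ≤ H ^ 2 :=
    Pexp_le hp fun s => by nlinarith [(hV s).1, (hV s).2]
  nlinarith [sq_nonneg (Pexp p V - 0)]

lemma varP_le_two_mul_add {p V W : 𝒮 → ℝ} {c : ℝ} (hp : p ∈ stdSimplex ℝ 𝒮)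
    (h : ∀ s, |V s - W s| ≤ c) : varP p V ≤ 2 * varP p W + 2 * c ^ 2 := by
  have h₁ := Pexp_sq_sub hp V (Pexp p W)
  have h₂ := Pexp_sq_sub hp W (Pexp p W)
  have h₃ : ∀ m, Pexp p (fun s => (V s - m) ^ 2)
      ≤ 2 * Pexp p (fun s => (W s - m) ^ 2) + 2 * c ^ 2 := by
    intro m
    rw [← Pexp_const hp (2 * c ^ 2)]
    simp only [Pexp, Finset.mul_sum, ← Finset.sum_add_distrib]
    refine Finset.sum_le_sum fun s _ => ?_
    have hs : (V s - W s) ^ 2 ≤ c ^ 2 := sq_le_sq' (abs_le.1 (h s)).1 (abs_le.1 (h s)).2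
    have : (V s - m) ^ 2 ≤ 2 * (W s - m) ^ 2 + 2 * c ^ 2 := by
      nlinarith [sq_nonneg ((V s - W s) - (W s - m))]
    nlinarith [mul_le_mul_of_nonneg_left this (hp.1 s)]
  nlinarith [sq_nonneg (Pexp p V - Pexp p W), h₃ (Pexp p W)]

/-- Functions of span at most `H` have deviation from the mean at most `H`. -/
lemma sub_Pexp_le {p V : 𝒮 → ℝ} {H : ℝ} (hp : p ∈ stdSimplex ℝ 𝒮)
    (hV : ∀ s s', V s - V s' ≤ H) (s : 𝒮) : V s - Pexp p V ≤ H := by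
  have := le_Pexp (V := V) (c := V s - H) hp fun s' => by linarith [hV s s']
  linarith

/-- The variance is monotone up to the mean increment, scaled by the span. -/
lemma varP_sub_le {p V W : 𝒮 → ℝ} {H : ℝ} (hp : p ∈ stdSimplex ℝ 𝒮)
    (hV : ∀ s s', V s - V s' ≤ H) (hW : ∀ s s', W s - W s' ≤ H) (h : ∀ s, V s ≤ W s) :
    varP p W - varP p V ≤ 2 * H * (Pexp p W - Pexp p V) := by
  have key : varP p W - varP p V = Pexp p
      (fun s => (W s - V s) * ((W s - Pexp p W) + (V s - Pexp p V))) := by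
    have : Pexp p (fun s => (W s - V s) * ((W s - Pexp p W) + (V s - Pexp p V)))
        = Pexp p (fun s => W s * W s) - Pexp p (fun s => V s * V s)
          - (Pexp p W + Pexp p V) * (Pexp p W - Pexp p V) := by
      conv_rhs => rw [← Pexp_sub, ← Pexp_sub]
      simp only [Pexp, Finset.mul_sum, ← Finset.sum_sub_distrib]
      exact Finset.sum_congr rfl fun s _ => by ring
    rw [this, varP, varP]
    ring
  rw [key, ← Pexp_sub]
  simp only [Pexp, Finset.mul_sum]
  refine Finset.sum_le_sum fun s _ => ?_
  have h₁ := sub_Pexp_le hp hV s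
  have h₂ := sub_Pexp_le hp hW s
  have h₃ := mul_nonneg (hp.1 s) (sub_nonneg.2 (h s))
  simp only [Pexp] at h₁ h₂
  nlinarith [mul_le_mul_of_nonneg_left (add_le_add h₁ h₂) h₃]

/-! ### The Bernstein-style penalty -/

section penalty

variable {γ δ Cb : ℝ} {N n : ℕ} {p V W : 𝒮 → ℝ}

lemma penalty_nonneg (hγ : γ < 1) : 0 ≤ penalty γ δ Cb N n p V := by
  have : 0 ≤ 1 / (1 - γ) := one_div_nonneg.2 (sub_nonneg.2 hγ.le)
  unfold penalty
  split_ifs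
  · positivity
  · exact add_nonneg (le_min (le_max_of_le_left (Real.sqrt_nonneg _)) this) (by positivity)

/-- The clipped square root of the variance grows at most half as fast as the mean. -/
lemma max_sqrt_varP_le {κ H : ℝ} (hp : p ∈ stdSimplex ℝ 𝒮) (hκ : 0 ≤ κ) (hH : 0 < H)
    (hV : ∀ s s', V s - V s' ≤ H) (hW : ∀ s s', W s - W s' ≤ H) (h : ∀ s, V s ≤ W s) :
    max (√(κ * varP p W)) (2 * κ * H)
      ≤ max (√(κ * varP p V)) (2 * κ * H) + (Pexp p W - Pexp p V) / 2 := by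
  have hm : 0 ≤ Pexp p W - Pexp p V := sub_nonneg.2 (Pexp_mono hp h)
  refine max_le ?_ (by linarith [le_max_right (√(κ * varP p V)) (2 * κ * H)])
  rcases hκ.eq_or_lt with rfl | hκ
  · simp; linarith
  set m := max (√(κ * varP p V)) (2 * κ * H) with hmdef
  have hm₁ : 2 * κ * H ≤ m := le_max_right _ _
  have hm₀ : 0 < m := lt_of_lt_of_le (by positivity) hm₁
  have hm₂ : κ * varP p V ≤ m ^ 2 := by
    rw [← Real.sq_sqrt (mul_nonneg hκ.le (varP_nonneg hp V))]
    exact pow_le_pow_left₀ (Real.sqrt_nonneg _) (le_max_left _ _) 2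
  have hvar := mul_le_mul_of_nonneg_left (varP_sub_le hp hV hW h) hκ.le
  refine Real.sqrt_le_iff.2 ⟨by linarith, ?_⟩
  nlinarith [mul_le_mul_of_nonneg_right hm₁ hm]

/-- One-sided Lipschitz property of `V ↦ γ p V - β(V)`. -/
lemma discounted_sub_penalty_le {c : ℝ} (hγ₂ : 1 / 2 ≤ γ) (hγ : γ < 1) (hCb : 0 ≤ Cb)
    (hlog : 0 ≤ Real.log ((N : ℝ) / ((1 - γ) * δ))) (hp : p ∈ stdSimplex ℝ 𝒮)
    (hV : ∀ s, V s ∈ Set.Icc 0 (1 / (1 - γ))) (hW : ∀ s, W s ∈ Set.Icc 0 (1 / (1 - γ)))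
    (h : ∀ s, V s ≤ W s + c) :
    γ * Pexp p V - penalty γ δ Cb N n p V ≤ γ * Pexp p W - penalty γ δ Cb N n p W + γ * c := by
  have hH : 0 < 1 / (1 - γ) := one_div_pos.2 (sub_pos.2 hγ)
  have hmono : Pexp p V ≤ Pexp p W + c :=
    (Pexp_mono hp h).trans_eq (Pexp_add_const hp W c)
  have hvar : varP p (fun s => W s + c) = varP p W := by
    have h₁ := Pexp_sq_sub hp (fun s => W s + c) (Pexp p W + c)
    have h₂ := Pexp_sq_sub hp W (Pexp p W)
    simp only [Pexp_add_const hp, add_sub_add_right_eq_sub, sub_self] at h₁ h₂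
    linarith
  unfold penalty
  split_ifs with hn
  · nlinarith
  set Λ := Real.log ((N : ℝ) / ((1 - γ) * δ))
  have hκ : 0 ≤ Cb * Λ / n := by positivity
  have key := max_sqrt_varP_le (V := V) (W := fun s => W s + c) hp hκ hH
    (fun s s' => by linarith [(hV s).2, (hV s').1])
    (fun s s' => by linarith [(hW s).2, (hW s').1]) h
  rw [hvar, Pexp_add_const hp] at key
  have e₁ : ∀ v : ℝ, Cb * Λ * v / n = Cb * Λ / n * v := fun v => by ring
  have e₂ : 2 * Cb * Λ / ((1 - γ) * n) = 2 * (Cb * Λ / n) * (1 / (1 - γ)) := by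
    have : (n : ℝ) ≠ 0 := Nat.cast_ne_zero.2 hn
    have : 1 - γ ≠ 0 := (sub_pos.2 hγ).ne'
    field_simp
  rw [e₁, e₁, e₂]
  have hmin : min (max (√(Cb * Λ / n * varP p W)) (2 * (Cb * Λ / n) * (1 / (1 - γ)))) (1 / (1 - γ))
      ≤ min (max (√(Cb * Λ / n * varP p V)) (2 * (Cb * Λ / n) * (1 / (1 - γ)))) (1 / (1 - γ))
        + (Pexp p W + c - Pexp p V) / 2 := by
    rw [min_add]
    exact min_le_min key (by linarith)
  nlinarith

end penalty

/-! ### Values of matrix games -/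

lemma pay_mono_add {M M' : 𝒜 → ℬ → ℝ} {w : 𝒜 → ℝ} {z : ℬ → ℝ} {c : ℝ}
    (hw : w ∈ stdSimplex ℝ 𝒜) (hz : z ∈ stdSimplex ℝ ℬ) (h : ∀ a b, M a b ≤ M' a b + c) :
    pay M w z ≤ pay M' w z + c := by
  have hc : c = ∑ a, ∑ b, w a * z b * c := by
    simp only [← Finset.sum_mul, ← Finset.mul_sum, hz.2, hw.2, one_mul, mul_one]
  conv_rhs => rw [hc]
  simp only [pay, ← Finset.sum_add_distrib, ← mul_add]
  exact Finset.sum_le_sum fun a _ => Finset.sum_le_sum fun b _ =>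
    mul_le_mul_of_nonneg_left (h a b) (mul_nonneg (hw.1 a) (hz.1 b))

lemma pay_const {w : 𝒜 → ℝ} {z : ℬ → ℝ} (hw : w ∈ stdSimplex ℝ 𝒜) (hz : z ∈ stdSimplex ℝ ℬ)
    (c : ℝ) : pay (fun _ _ => c) w z = c := by
  simp only [pay, ← Finset.sum_mul, ← Finset.mul_sum, hz.2, hw.2, one_mul, mul_one]

lemma exists_abs_pay_le (M : 𝒜 → ℬ → ℝ) :
    ∃ K : ℝ, ∀ w ∈ stdSimplex ℝ 𝒜, ∀ z ∈ stdSimplex ℝ ℬ, |pay M w z| ≤ K := by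
  refine ⟨∑ a, ∑ b, |M a b|, fun w hw z hz => ?_⟩
  have hle : ∀ a b, |M a b| ≤ ∑ a, ∑ b, |M a b| := fun a b =>
    (Finset.single_le_sum (f := fun b => |M a b|) (fun _ _ => abs_nonneg _)
      (Finset.mem_univ b)).trans
      (Finset.single_le_sum (f := fun a => ∑ b, |M a b|)
        (fun _ _ => Finset.sum_nonneg fun _ _ => abs_nonneg _) (Finset.mem_univ a))
  have h₁ := pay_mono_add (M := M) (M' := fun _ _ => 0) hw hz
    fun a b => (zero_add (∑ a, ∑ b, |M a b|)).symm ▸ (le_abs_self _).trans (hle a b)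
  have h₂ := pay_mono_add (M := fun _ _ => 0) (M' := M) hw hz
    fun a b => by linarith [neg_abs_le (M a b), hle a b]
  rw [pay_const hw hz] at h₁ h₂
  exact abs_le.2 ⟨by linarith, by linarith⟩

lemma bddBelow_pay (M : 𝒜 → ℬ → ℝ) (w : stdSimplex ℝ 𝒜) :
    BddBelow (Set.range fun z : stdSimplex ℝ ℬ => pay M w.1 z.1) := by
  obtain ⟨K, hK⟩ := exists_abs_pay_le M
  exact ⟨-K, by rintro _ ⟨z, rfl⟩; exact (abs_le.1 (hK w.1 w.2 z.1 z.2)).1⟩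

section valQ

variable [Nonempty 𝒜] [Nonempty ℬ]

lemma bddAbove_iInf_pay (M : 𝒜 → ℬ → ℝ) :
    BddAbove (Set.range fun w : stdSimplex ℝ 𝒜 => ⨅ z : stdSimplex ℝ ℬ, pay M w.1 z.1) := by
  obtain ⟨K, hK⟩ := exists_abs_pay_le M
  obtain ⟨z⟩ : Nonempty (stdSimplex ℝ ℬ) := inferInstance
  refine ⟨K, ?_⟩
  rintro _ ⟨w, rfl⟩
  exact (ciInf_le (bddBelow_pay M w) z).trans (abs_le.1 (hK w.1 w.2 z.1 z.2)).2

lemma valQ_le_add {Q Q' : 𝒮 → 𝒜 → ℬ → ℝ} {s : 𝒮} {c : ℝ}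
    (h : ∀ a b, Q s a b ≤ Q' s a b + c) : valQ Q s ≤ valQ Q' s + c := by
  refine ciSup_le fun w => ?_
  have h₁ : (⨅ z : stdSimplex ℝ ℬ, pay (Q s) w.1 z.1) - c
      ≤ ⨅ z : stdSimplex ℝ ℬ, pay (Q' s) w.1 z.1 :=
    le_ciInf fun z => by
      linarith [ciInf_le (bddBelow_pay (Q s) w) z, pay_mono_add w.2 z.2 h]
  have h₂ := le_ciSup (bddAbove_iInf_pay (ℬ := ℬ) (Q' s)) w
  simp only [valQ]
  linarith

lemma valQ_const (c : ℝ) (s : 𝒮) : valQ (fun (_ : 𝒮) (_ : 𝒜) (_ : ℬ) => c) s = c := by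
  simp only [valQ, pay_const (Subtype.prop _) (Subtype.prop _), ciInf_const, ciSup_const]

lemma valQ_mem_Icc {Q : 𝒮 → 𝒜 → ℬ → ℝ} {s : 𝒮} {l u : ℝ}
    (h : ∀ a b, Q s a b ∈ Set.Icc l u) : valQ Q s ∈ Set.Icc l u := by
  have h₁ := valQ_le_add (Q := Q) (Q' := fun _ _ _ => u) (s := s) (c := 0)
    fun a b => by simpa using (h a b).2
  have h₂ := valQ_le_add (Q := fun _ _ _ => l) (Q' := Q) (s := s) (c := 0)
    fun a b => by simpa using (h a b).1
  rw [valQ_const] at h₁ h₂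
  exact ⟨by linarith, by linarith⟩

lemma le_valQ {Q : 𝒮 → 𝒜 → ℬ → ℝ} {s : 𝒮} {w : 𝒜 → ℝ} {t : ℝ} (hw : w ∈ stdSimplex ℝ 𝒜)
    (h : ∀ z ∈ stdSimplex ℝ ℬ, t ≤ pay (Q s) w z) : t ≤ valQ Q s :=
  (le_ciInf fun z : stdSimplex ℝ ℬ => h z.1 z.2).trans
    (le_ciSup (bddAbove_iInf_pay (ℬ := ℬ) (Q s)) ⟨w, hw⟩)

end valQ

/-! ### Contractions of the space of value functions -/

/-- `F` is a `γ`-contraction for the supremum distance. -/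
def IsContr (γ : ℝ) (F : (𝒮 → ℝ) → 𝒮 → ℝ) : Prop :=
  ∀ V W c, (∀ s, |V s - W s| ≤ c) → ∀ s, |F V s - F W s| ≤ γ * c

/-- A fixed point of `F`, if there is one. -/
def fixPt (F : (𝒮 → ℝ) → 𝒮 → ℝ) : 𝒮 → ℝ := Classical.epsilon fun V => F V = V

section contraction

variable [Nonempty 𝒮] {γ : ℝ} {F : (𝒮 → ℝ) → 𝒮 → ℝ}

lemma IsContr.fixPt_eq (hF : IsContr γ F) (hγ₀ : 0 ≤ γ) (hγ : γ < 1) :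
    F (fixPt F) = fixPt F := by
  have hc : ContractingWith ⟨γ, hγ₀⟩ F := by
    refine ⟨by exact_mod_cast hγ, LipschitzWith.of_dist_le_mul fun V W => ?_⟩
    refine (dist_pi_le_iff (by positivity)).2 fun s => ?_
    exact hF V W (dist V W) (fun s => dist_le_pi_dist V W s) s
  exact Classical.epsilon_spec (p := fun V => F V = V) ⟨_, hc.fixedPoint_isFixedPt⟩

/-- A distance that is bounded by a strict contraction of itself up to `c` is at most `c`. -/
lemma abs_sub_le_of_self_bound {V W : 𝒮 → ℝ} {c : ℝ} (hγ : γ < 1)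
    (h : ∀ e, (∀ s, |V s - W s| ≤ e) → ∀ s, |V s - W s| ≤ max (γ * e) c) (hc : 0 ≤ c) (s : 𝒮) :
    |V s - W s| ≤ c := by
  obtain ⟨s₀, hs₀⟩ := Finite.exists_max fun s => |V s - W s|
  rcases le_max_iff.1 (h _ hs₀ s₀) with h' | h'
  · exact (hs₀ s).trans (by nlinarith [abs_nonneg (V s₀ - W s₀)])
  · exact (hs₀ s).trans h'

lemma IsContr.abs_iterate_sub_le (hF : IsContr γ F) {V W : 𝒮 → ℝ} {c : ℝ}
    (h : ∀ s, |V s - W s| ≤ c) (t : ℕ) (s : 𝒮) :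
    |F^[t] V s - F^[t] W s| ≤ γ ^ t * c := by
  induction t generalizing s with
  | zero => simpa using h s
  | succ t ih =>
    rw [Function.iterate_succ_apply', Function.iterate_succ_apply', pow_succ', mul_assoc]
    exact hF _ _ _ ih s

end contraction

/-! ### Resampling the next states of the dataset -/

section resampling

variable {N : ℕ}

/-- The `i`-th sample of `D` is a transition from `(s, a, b)`. -/
def IsAt (D : Fin N → 𝒮 × 𝒜 × ℬ × 𝒮) (s : 𝒮) (a : 𝒜) (b : ℬ) (i : Fin N) : Prop :=
  (D i).1 = s ∧ (D i).2.1 = a ∧ (D i).2.2.1 = b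

/-- Replace the next state of the `i`-th sample of `D` by `y`. -/
def setNext (D : Fin N → 𝒮 × 𝒜 × ℬ × 𝒮) (i : Fin N) (y : 𝒮) : Fin N → 𝒮 × 𝒜 × ℬ × 𝒮 :=
  Function.update D i ((D i).1, (D i).2.1, (D i).2.2.1, y)

lemma isAt_setNext (D : Fin N → 𝒮 × 𝒜 × ℬ × 𝒮) (i j : Fin N) (y s : 𝒮) (a : 𝒜) (b : ℬ) :
    IsAt (setNext D i y) s a b j ↔ IsAt D s a b j := by
  rcases eq_or_ne j i with rfl | h
  · simp [IsAt, setNext]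
  · simp [IsAt, setNext, h]

lemma cnt_eq_card_isAt (D : Fin N → 𝒮 × 𝒜 × ℬ × 𝒮) (s : 𝒮) (a : 𝒜) (b : ℬ) :
    cnt D s a b = (Finset.univ.filter fun i => IsAt D s a b i).card := by
  unfold cnt IsAt
  congr

lemma cnt_setNext (D : Fin N → 𝒮 × 𝒜 × ℬ × 𝒮) (i : Fin N) (y : 𝒮) :
    cnt (setNext D i y) = cnt D := by
  funext s a b
  simp only [cnt_eq_card_isAt, isAt_setNext]

lemma Phat_setNext {D : Fin N → 𝒮 × 𝒜 × ℬ × 𝒮} {i : Fin N} {s : 𝒮} (y : 𝒮)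
    (h : (D i).1 ≠ s) (a : 𝒜) (b : ℬ) : Phat (setNext D i y) s a b = Phat D s a b := by
  have hT : ∀ s', cntT (setNext D i y) s a b s' = cntT D s a b s' := by
    intro s'
    refine congrArg Finset.card (Finset.filter_congr fun j _ => ?_)
    rcases eq_or_ne j i with rfl | hj
    · simp only [setNext, Function.update_self]
      constructor <;> intro e <;> exact absurd (congrArg Prod.fst e) h
    · simp [setNext, hj]
  funext s'
  simp only [Phat, cnt_setNext, hT]

/-- The expectation of a function of the dataset is unchanged by resampling one next state. -/
lemma sum_dsWeight_resample (d : 𝒮 → 𝒜 → ℬ → ℝ) {P : 𝒮 → 𝒜 → ℬ → 𝒮 → ℝ} (hP : IsKernel P)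
    (F : (Fin N → 𝒮 × 𝒜 × ℬ × 𝒮) → ℝ) (i : Fin N) :
    ∑ D, dsWeight d P D * F D
      = ∑ D, dsWeight d P D *
          ∑ y, P (D i).1 (D i).2.1 (D i).2.2.1 y * F (setNext D i y) := by
  let e : ((Fin N → 𝒮 × 𝒜 × ℬ × 𝒮) × 𝒮) → (Fin N → 𝒮 × 𝒜 × ℬ × 𝒮) × 𝒮 :=
    fun x => (setNext x.1 i x.2, (x.1 i).2.2.2)
  have he : Function.Involutive e := by
    rintro ⟨D, y⟩
    simp [e, setNext]
  have hw : ∀ D y, dsWeight d P (setNext D i y) * P (D i).1 (D i).2.1 (D i).2.2.1 (D i).2.2.2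
      = dsWeight d P D * P (D i).1 (D i).2.1 (D i).2.2.1 y := by
    intro D y
    unfold dsWeight
    rw [Fintype.prod_eq_mul_prod_compl i, Fintype.prod_eq_mul_prod_compl (a := i) (M := ℝ)]
    have : ∀ j ∈ ({i} : Finset (Fin N))ᶜ, setNext D i y j = D j := fun j hj => by
      simp only [Finset.mem_compl, Finset.mem_singleton] at hj
      simp [setNext, hj]
    rw [Finset.prod_congr rfl fun j hj => by rw [this j hj]]
    simp only [setNext, Function.update_self]
    ring
  calc ∑ D, dsWeight d P D * F D
      = ∑ x : (Fin N → 𝒮 × 𝒜 × ℬ × 𝒮) × 𝒮,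
          dsWeight d P x.1 * P (x.1 i).1 (x.1 i).2.1 (x.1 i).2.2.1 x.2 * F x.1 := by
        rw [Fintype.sum_prod_type]
        refine Finset.sum_congr rfl fun D _ => ?_
        dsimp only
        rw [← Finset.sum_mul, ← Finset.mul_sum, (hP _ _ _).2, mul_one]
    _ = ∑ x : (Fin N → 𝒮 × 𝒜 × ℬ × 𝒮) × 𝒮,
          dsWeight d P x.1 * P (x.1 i).1 (x.1 i).2.1 (x.1 i).2.2.1 x.2 * F (setNext x.1 i x.2) := by
        rw [← Equiv.sum_comp he.toPerm]
        refine Finset.sum_congr rfl fun x _ => ?_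
        rw [← hw]
        simp [e, setNext]
    _ = _ := by
        rw [Fintype.sum_prod_type]
        refine Finset.sum_congr rfl fun D _ => ?_
        simp only [Finset.mul_sum, mul_assoc]

/-- Resampling a next state only on the event that the sample is at `(s, a, b)`. -/
lemma sum_dsWeight_resample_isAt (d : 𝒮 → 𝒜 → ℬ → ℝ) {P : 𝒮 → 𝒜 → ℬ → 𝒮 → ℝ}
    (hP : IsKernel P) (F : (Fin N → 𝒮 × 𝒜 × ℬ × 𝒮) → ℝ) (i : Fin N) (s : 𝒮) (a : 𝒜) (b : ℬ) :
    ∑ D, dsWeight d P D * F D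
      = ∑ D, dsWeight d P D *
          if IsAt D s a b i then ∑ y, P s a b y * F (setNext D i y) else F D := by
  have h := sum_dsWeight_resample d hP (fun D => if IsAt D s a b i then F D else 0) i
  have h₁ : ∑ D, dsWeight d P D * F D
      = ∑ D, dsWeight d P D * (if IsAt D s a b i then F D else 0)
        + ∑ D, dsWeight d P D * (if IsAt D s a b i then 0 else F D) := by
    rw [← Finset.sum_add_distrib]
    exact Finset.sum_congr rfl fun D _ => by split_ifs <;> simp
  rw [h₁, h, ← Finset.sum_add_distrib]
  refine Finset.sum_congr rfl fun D _ => ?_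
  simp only [isAt_setNext]
  split_ifs with hD
  · rw [hD.1, hD.2.1, hD.2.2]
    simp
  · simp

lemma dsWeight_nonneg {d : 𝒮 → 𝒜 → ℬ → ℝ} {P : 𝒮 → 𝒜 → ℬ → 𝒮 → ℝ} (hd : IsDist3 d)
    (hP : IsKernel P) (D : Fin N → 𝒮 × 𝒜 × ℬ × 𝒮) : 0 ≤ dsWeight d P D :=
  Finset.prod_nonneg fun _ _ => mul_nonneg (hd.1 _ _ _) ((hP _ _ _).1 _)

lemma sum_dsWeight {d : 𝒮 → 𝒜 → ℬ → ℝ} {P : 𝒮 → 𝒜 → ℬ → 𝒮 → ℝ} (hd : IsDist3 d)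
    (hP : IsKernel P) : ∑ D : Fin N → 𝒮 × 𝒜 × ℬ × 𝒮, dsWeight d P D = 1 := by
  have h : ∑ z : 𝒮 × 𝒜 × ℬ × 𝒮, d z.1 z.2.1 z.2.2.1 * P z.1 z.2.1 z.2.2.1 z.2.2.2 = 1 := by
    simp only [Fintype.sum_prod_type, ← Finset.mul_sum, (hP _ _ _).2, mul_one, hd.2]
  have h' := Fintype.prod_sum (ι := Fin N)
    fun (_ : Fin N) (z : 𝒮 × 𝒜 × ℬ × 𝒮) =>
      d z.1 z.2.1 z.2.2.1 * P z.1 z.2.1 z.2.2.1 z.2.2.2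
  simp only [h, Finset.prod_const_one] at h'
  exact h'.symm

/-- Exponential supermartingale bound: if, given the samples not at `(s, a, b)`, the factor
`g D` has mean at most one under `P s a b`, then so does its product over the samples
at `(s, a, b)`. -/
lemma sum_dsWeight_mul_prod_le {d : 𝒮 → 𝒜 → ℬ → ℝ} {P : 𝒮 → 𝒜 → ℬ → 𝒮 → ℝ} (hd : IsDist3 d)
    (hP : IsKernel P) (s : 𝒮) (a : 𝒜) (b : ℬ) {h : (Fin N → 𝒮 × 𝒜 × ℬ × 𝒮) → ℝ}
    {g : (Fin N → 𝒮 × 𝒜 × ℬ × 𝒮) → 𝒮 → ℝ} (h₀ : ∀ D, 0 ≤ h D) (g₀ : ∀ D y, 0 ≤ g D y)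
    (hinv : ∀ D i y, h (setNext D i y) = h D)
    (ginv : ∀ D i y, IsAt D s a b i → g (setNext D i y) = g D)
    (hmean : ∀ D, ∑ y, P s a b y * g D y ≤ 1) (J : Finset (Fin N)) :
    ∑ D, dsWeight d P D * (h D * ∏ j ∈ J, if IsAt D s a b j then g D (D j).2.2.2 else 1)
      ≤ ∑ D, dsWeight d P D * h D := by
  induction J using Finset.induction_on with
  | empty => simp
  | insert i J hi ih =>
    refine le_trans ?_ ih
    rw [sum_dsWeight_resample_isAt d hP _ i s a b]
    refine Finset.sum_le_sum fun D _ => mul_le_mul_of_nonneg_left ?_ (dsWeight_nonneg hd hP D)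
    have hprod : 0 ≤ h D * ∏ j ∈ J, if IsAt D s a b j then g D (D j).2.2.2 else 1 :=
      mul_nonneg (h₀ D) (Finset.prod_nonneg fun j _ => by split_ifs <;> simp [g₀])
    split_ifs with hD
    · have hF : ∀ y, h (setNext D i y) * (∏ j ∈ insert i J,
          if IsAt (setNext D i y) s a b j then
            g (setNext D i y) (setNext D i y j).2.2.2 else 1)
          = g D y * (h D * ∏ j ∈ J, if IsAt D s a b j then g D (D j).2.2.2 else 1) := by
        intro y
        rw [hinv, ginv D i y hD, Finset.prod_insert hi]
        simp only [isAt_setNext, hD, if_true]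
        rw [Finset.prod_congr rfl fun j hj => by
          rw [show setNext D i y j = D j by
            simp [setNext, ne_of_mem_of_not_mem hj hi]]]
        simp only [setNext, Function.update_self]
        ring
      simp only [hF, ← mul_assoc, ← Finset.sum_mul]
      simp only [mul_assoc]
      exact mul_le_of_le_one_left hprod (hmean D)
    · rw [Finset.prod_insert hi, if_neg hD, one_mul]

lemma sum_cnt (D : Fin N → 𝒮 × 𝒜 × ℬ × 𝒮) : ∑ s, ∑ a, ∑ b, cnt D s a b = N := by
  have h : ∑ x : 𝒮 × 𝒜 × ℬ, cnt D x.1 x.2.1 x.2.2 = N := by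
    have h' := Finset.card_eq_sum_card_fiberwise (s := (Finset.univ : Finset (Fin N)))
      (t := (Finset.univ : Finset (𝒮 × 𝒜 × ℬ)))
      (f := fun i => ((D i).1, (D i).2.1, (D i).2.2.1)) (fun _ _ => Finset.mem_univ _)
    rw [Finset.card_univ, Fintype.card_fin] at h'
    refine (Finset.sum_congr rfl fun x _ => ?_).trans h'.symm
    unfold cnt
    congr 1
    ext i
    simp [Prod.ext_iff]
  simpa only [Fintype.sum_prod_type] using h

lemma sum_cntT (D : Fin N → 𝒮 × 𝒜 × ℬ × 𝒮) (s : 𝒮) (a : 𝒜) (b : ℬ) (f : 𝒮 → ℝ) :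
    ∑ s', (cntT D s a b s' : ℝ) * f s'
      = ∑ i, if IsAt D s a b i then f (D i).2.2.2 else 0 := by
  have h : ∀ s', (cntT D s a b s' : ℝ) * f s'
      = ∑ i, if D i = (s, a, b, s') then f s' else 0 := fun s' => by
    rw [cntT, Finset.card_filter]
    push_cast
    rw [Finset.sum_mul]
    exact Finset.sum_congr rfl fun i _ => by split_ifs <;> simp
  simp only [h]
  rw [Finset.sum_comm]
  refine Finset.sum_congr rfl fun i _ => ?_
  by_cases hi : IsAt D s a b i
  · rw [if_pos hi, Finset.sum_eq_single (D i).2.2.2]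
    · rw [if_pos (by simp [Prod.ext_iff, hi.1, hi.2.1, hi.2.2])]
    · intro s' _ hs'
      rw [if_neg fun e => hs' (by rw [e])]
    · simp
  · rw [if_neg hi]
    refine Finset.sum_eq_zero fun s' _ => if_neg fun e => hi ?_
    simp [IsAt, e]

/-- Averages under the empirical kernel are averages over the samples at `(s, a, b)`. -/
lemma cnt_mul_Pexp_Phat {D : Fin N → 𝒮 × 𝒜 × ℬ × 𝒮} {s : 𝒮} {a : 𝒜} {b : ℬ}
    (h : cnt D s a b ≠ 0) (f : 𝒮 → ℝ) :
    (cnt D s a b : ℝ) * Pexp (Phat D s a b) f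
      = ∑ i, if IsAt D s a b i then f (D i).2.2.2 else 0 := by
  have h' : (cnt D s a b : ℝ) ≠ 0 := Nat.cast_ne_zero.2 h
  rw [← sum_cntT, Pexp, Finset.mul_sum]
  refine Finset.sum_congr rfl fun s' _ => ?_
  rw [Phat, if_neg h]
  field_simp

lemma Phat_mem_stdSimplex [Nonempty 𝒮] (D : Fin N → 𝒮 × 𝒜 × ℬ × 𝒮) (s : 𝒮) (a : 𝒜) (b : ℬ) :
    Phat D s a b ∈ stdSimplex ℝ 𝒮 := by
  by_cases h : cnt D s a b = 0
  · refine ⟨fun s' => ?_, ?_⟩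
    · rw [Phat, if_pos h]
      positivity
    · simp [Phat, h]
  · refine ⟨fun s' => ?_, ?_⟩
    · rw [Phat, if_neg h]
      positivity
    · have h' := cnt_mul_Pexp_Phat h fun _ => 1
      have hc : ∑ i, (if IsAt D s a b i then (1 : ℝ) else 0) = cnt D s a b := by
        rw [cnt_eq_card_isAt, Finset.card_filter]
        push_cast
        rfl
      rw [hc] at h'
      simp only [Pexp, mul_one] at h'
      exact mul_left_cancel₀ (Nat.cast_ne_zero.2 h) (h'.trans (mul_one _).symm)

end resampling

/-! ### A self-normalized exponential inequality -/

lemma exp_sub_sq_le {x : ℝ} (hx : |x| ≤ 1 / 4) : Real.exp (x - x ^ 2) ≤ 1 + x := by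
  have h₁ := (abs_le.1 hx).1
  have hlog := Real.abs_log_sub_add_sum_range_le (x := -x) (by rw [abs_neg]; linarith) 2
  rw [abs_neg] at hlog
  have hb : |x| ^ (2 + 1) / (1 - |x|) ≤ x ^ 2 / 2 := by
    rw [div_le_iff₀ (by linarith), ← sq_abs]
    nlinarith [sq_nonneg |x|, abs_nonneg x]
  have h₂ := (abs_le.1 (hlog.trans hb)).1
  norm_num [Finset.sum_range_succ] at h₂
  rw [← Real.le_log_iff_exp_le (by linarith)]
  linarith

/-- Mean of the self-normalized exponential factor. -/
lemma sum_mul_exp_sub_sq_le {p V : 𝒮 → ℝ} {H t : ℝ} (hp : p ∈ stdSimplex ℝ 𝒮)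
    (hV : ∀ s, V s ∈ Set.Icc 0 H) (ht : 0 ≤ t) (htH : t * H ≤ 1 / 4) :
    ∑ y, p y * Real.exp (t * (Pexp p V - V y) - (t * (Pexp p V - V y)) ^ 2) ≤ 1 := by
  have hm₀ : 0 ≤ Pexp p V := le_Pexp hp fun s => (hV s).1
  have hm₁ : Pexp p V ≤ H := Pexp_le hp fun s => (hV s).2
  calc ∑ y, p y * Real.exp (t * (Pexp p V - V y) - (t * (Pexp p V - V y)) ^ 2)
      ≤ ∑ y, p y * (1 + t * (Pexp p V - V y)) := by
        refine Finset.sum_le_sum fun y _ => mul_le_mul_of_nonneg_left ?_ (hp.1 y)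
        refine exp_sub_sq_le (abs_le.2 ⟨?_, ?_⟩) <;> nlinarith [(hV y).1, (hV y).2]
    _ = (1 + t * Pexp p V) * ∑ y, p y - t * Pexp p V := by
        have h : ∀ m, ∑ y, p y * (1 + t * (m - V y)) = (1 + t * m) * ∑ y, p y - t * Pexp p V := by
          intro m
          simp only [Pexp, Finset.mul_sum, ← Finset.sum_sub_distrib]
          exact Finset.sum_congr rfl fun y _ => by ring
        exact h _
    _ ≤ 1 := by rw [hp.2]; linarith

/-- Optimizing the self-normalized bound over a grid of exponents gives an empirical
Bernstein bound on the deviation `x`, with `v` the empirical variance. -/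
lemma le_sqrt_of_forall_grid {x v H L n : ℝ} {N : ℕ} (hH : 0 < H) (hv₀ : 0 ≤ v)
    (hvH : v ≤ H ^ 2) (hx : x ≤ H) (hn : 1 ≤ n) (hnN : n ≤ N) (hL : 1 ≤ L)
    (h : ∀ k < N, n * (1 / (4 * H * (k + 1)) * x
      - (1 / (4 * H * (k + 1))) ^ 2 * (v + x ^ 2)) ≤ L) :
    x ≤ 4 * √(L * v / n) + 8 * (H * L / n) := by
  have hn₀ : 0 < n := by linarith
  have hL₀ : 0 < L := by linarith
  set w := √(L * v / n) with hw
  have hw₀ : 0 ≤ w := Real.sqrt_nonneg _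
  have hw₂ : w ^ 2 = L * v / n := Real.sq_sqrt (by positivity)
  have hHL : 0 < H * L / n := by positivity
  rcases le_or_gt x 0 with hx₀ | hx₀
  · nlinarith
  have hv : v = w ^ 2 * n / L := by rw [hw₂]; field_simp
  have hwH : w * n / L ≤ H * N := by
    refine le_of_sq_le_sq ?_ (by positivity)
    have h₁ : (w * n / L) ^ 2 = v * (n / L) := by rw [hv]; field_simp
    have h₂ : n / L ≤ N := (div_le_self hn₀.le hL).trans hnN
    have h₃ : (1 : ℝ) ≤ N := hn.trans hnN
    rw [h₁]
    calc v * (n / L) ≤ H ^ 2 * N := by gcongr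
      _ ≤ (H * N) ^ 2 := by rw [mul_pow]; gcongr; nlinarith
  set k := ⌊w * n / L / (4 * H)⌋₊ with hk
  have hk₁ : (k : ℝ) ≤ w * n / L / (4 * H) := Nat.floor_le (by positivity)
  have hk₂ : w * n / L / (4 * H) < k + 1 := Nat.lt_floor_add_one _
  have hkN : k < N := by
    have h₃ : (1 : ℝ) ≤ N := hn.trans hnN
    have : (k : ℝ) < N := hk₁.trans_lt (by rw [div_lt_iff₀ (by positivity)]; nlinarith)
    exact_mod_cast this
  rw [le_div_iff₀ (by positivity)] at hk₁
  rw [div_lt_iff₀ (by positivity)] at hk₂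
  have hg := h k hkN
  set q := 4 * H * ((k : ℝ) + 1) with hq
  have hqH : 4 * H ≤ q := by nlinarith [Nat.cast_nonneg (α := ℝ) k]
  have hq₀ : 0 < q := by positivity
  have hq₁ : w * n / L ≤ q := by nlinarith
  have hq₂ : q ≤ w * n / L + 4 * H := by nlinarith
  have hg' : x - v / q - x ^ 2 / q ≤ L * q / n := by
    have e : n * (1 / q * x - (1 / q) ^ 2 * (v + x ^ 2)) = n / q * (x - v / q - x ^ 2 / q) := by
      field_simp
      ring
    rw [e] at hg
    rw [le_div_iff₀ hn₀]
    have := mul_le_mul_of_nonneg_right hg hq₀.le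
    calc (x - v / q - x ^ 2 / q) * n = n / q * (x - v / q - x ^ 2 / q) * q := by field_simp
      _ ≤ L * q := this
  have hvq : v / q ≤ w := by
    rw [div_le_iff₀ hq₀, hv]
    calc w ^ 2 * n / L = w * (w * n / L) := by ring
      _ ≤ w * q := by gcongr
  have hxq : x ^ 2 / q ≤ x / 4 := by
    rw [div_le_iff₀ hq₀]
    nlinarith
  have hLq : L * q / n ≤ w + 4 * (H * L / n) := by
    calc L * q / n ≤ L * (w * n / L + 4 * H) / n := by gcongr
      _ = w + 4 * (H * L / n) := by field_simp
  linarith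

/-! ### The pessimistic operator on value functions -/

/-- Projection of a value function to `[0, H]`. -/
def clipV (H : ℝ) (V : 𝒮 → ℝ) : 𝒮 → ℝ := fun s => max 0 (min (V s) H)

lemma clipV_mem {H : ℝ} (hH : 0 ≤ H) (V : 𝒮 → ℝ) (s : 𝒮) : clipV H V s ∈ Set.Icc 0 H :=
  ⟨le_max_left _ _, max_le hH (min_le_right _ _)⟩

lemma clipV_eq {H : ℝ} {V : 𝒮 → ℝ} (hV : ∀ s, V s ∈ Set.Icc 0 H) : clipV H V = V := by
  funext s
  rw [clipV, min_eq_left (hV s).2, max_eq_right (hV s).1]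

lemma clipV_le_add {H c : ℝ} {V W : 𝒮 → ℝ} {s : 𝒮} (hc : 0 ≤ c) (h : V s ≤ W s + c) :
    clipV H V s ≤ clipV H W s + c := by
  simp only [clipV]
  rw [max_add, min_add]
  exact max_le_max (by linarith) (min_le_min h (by linarith))

/-- The pessimistic Q-function built from the (clipped) value function `V`. -/
def qOp (γ δ Cb : ℝ) (r : 𝒮 → 𝒜 → ℬ → ℝ) {N : ℕ} (D : Fin N → 𝒮 × 𝒜 × ℬ × 𝒮)
    (V : 𝒮 → ℝ) : 𝒮 → 𝒜 → ℬ → ℝ := fun s a b =>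
  max (rhat r D s a b + γ * Pexp (Phat D s a b) (clipV (1 / (1 - γ)) V)
    - penalty γ δ Cb N (cnt D s a b) (Phat D s a b) (clipV (1 / (1 - γ)) V)) 0

/-- The pessimistic Bellman operator on value functions. -/
def vOp (γ δ Cb : ℝ) (r : 𝒮 → 𝒜 → ℬ → ℝ) {N : ℕ} (D : Fin N → 𝒮 × 𝒜 × ℬ × 𝒮)
    (V : 𝒮 → ℝ) : 𝒮 → ℝ := valQ (qOp γ δ Cb r D V)

/-- The pessimistic Bellman operator with the value at `s` frozen to `u`. -/
def looOp (γ δ Cb : ℝ) (r : 𝒮 → 𝒜 → ℬ → ℝ) {N : ℕ} (D : Fin N → 𝒮 × 𝒜 × ℬ × 𝒮)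
    (s : 𝒮) (u : ℝ) (V : 𝒮 → ℝ) : 𝒮 → ℝ := Function.update (vOp γ δ Cb r D V) s u

/-- The fixed point of the pessimistic operator frozen at `s`; it does not depend on the
next states of the samples at `s`. -/
def looV (γ δ Cb : ℝ) (r : 𝒮 → 𝒜 → ℬ → ℝ) {N : ℕ} (D : Fin N → 𝒮 × 𝒜 × ℬ × 𝒮)
    (s : 𝒮) (u : ℝ) : 𝒮 → ℝ := fixPt (looOp γ δ Cb r D s u)

section operator

variable [Nonempty 𝒮] [Nonempty 𝒜] [Nonempty ℬ]
  {γ δ Cb : ℝ} {r : 𝒮 → 𝒜 → ℬ → ℝ} {N : ℕ} {D : Fin N → 𝒮 × 𝒜 × ℬ × 𝒮}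

lemma log_ratio_nonneg (hγ₂ : 1 / 2 ≤ γ) (hγ : γ < 1) (hδ : δ ∈ Set.Ioo (0 : ℝ) 1) (N : ℕ) :
    0 ≤ Real.log ((N : ℝ) / ((1 - γ) * δ)) := by
  rcases Nat.eq_zero_or_pos N with rfl | hN
  · simp
  have hN : (1 : ℝ) ≤ N := by exact_mod_cast hN
  have h₀ : 0 < (1 - γ) * δ := mul_pos (sub_pos.2 hγ) hδ.1
  refine Real.log_nonneg ?_
  rw [le_div_iff₀ h₀]
  nlinarith [hδ.1, hδ.2]

lemma qOp_mem (hγ₂ : 1 / 2 ≤ γ) (hγ : γ < 1) (hr : IsReward r) (V : 𝒮 → ℝ) (s : 𝒮) (a : 𝒜)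
    (b : ℬ) : qOp γ δ Cb r D V s a b ∈ Set.Icc 0 (1 / (1 - γ)) := by
  have hγ' : 0 < 1 - γ := sub_pos.2 hγ
  have hH : 0 < 1 / (1 - γ) := one_div_pos.2 hγ'
  refine ⟨le_max_right _ _, max_le ?_ hH.le⟩
  have h₁ : rhat r D s a b ≤ 1 := by
    unfold rhat
    split_ifs
    · norm_num
    · exact (hr s a b).2
  have h₂ := Pexp_le (Phat_mem_stdSimplex D s a b) fun s => (clipV_mem hH.le V s).2
  have h₃ := penalty_nonneg (δ := δ) (Cb := Cb) (N := N) (n := cnt D s a b)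
    (p := Phat D s a b) (V := clipV (1 / (1 - γ)) V) hγ
  have h₄ : 1 / (1 - γ) = 1 + γ * (1 / (1 - γ)) := by field_simp; ring
  nlinarith

lemma vOp_mem (hγ₂ : 1 / 2 ≤ γ) (hγ : γ < 1) (hr : IsReward r) (V : 𝒮 → ℝ) (s : 𝒮) :
    vOp γ δ Cb r D V s ∈ Set.Icc 0 (1 / (1 - γ)) :=
  valQ_mem_Icc fun a b => qOp_mem hγ₂ hγ hr V s a b

lemma qOp_le_add (hγ₂ : 1 / 2 ≤ γ) (hγ : γ < 1) (hδ : δ ∈ Set.Ioo (0 : ℝ) 1) (hCb : 0 ≤ Cb)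
    {V W : 𝒮 → ℝ} {c : ℝ} (hc : 0 ≤ c) (h : ∀ s, V s ≤ W s + c) (s : 𝒮) (a : 𝒜) (b : ℬ) :
    qOp γ δ Cb r D V s a b ≤ qOp γ δ Cb r D W s a b + γ * c := by
  have hH : 0 ≤ 1 / (1 - γ) := one_div_nonneg.2 (sub_nonneg.2 hγ.le)
  have hL := discounted_sub_penalty_le (n := cnt D s a b) hγ₂ hγ hCb
    (log_ratio_nonneg hγ₂ hγ hδ N)
    (Phat_mem_stdSimplex D s a b) (clipV_mem hH V) (clipV_mem hH W)
    (fun s => clipV_le_add hc (h s))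
  simp only [qOp]
  rw [max_add]
  exact max_le_max (by linarith) (by nlinarith)

lemma isContr_vOp (hγ₂ : 1 / 2 ≤ γ) (hγ : γ < 1) (hδ : δ ∈ Set.Ioo (0 : ℝ) 1) (hCb : 0 ≤ Cb) :
    IsContr γ (vOp γ δ Cb r D) := by
  intro V W c h s
  have hc : 0 ≤ c := (abs_nonneg _).trans (h s)
  have h₁ := valQ_le_add (s := s) (qOp_le_add (r := r) (D := D) hγ₂ hγ hδ hCb (V := V) (W := W) hc
    (fun s => by linarith [(abs_le.1 (h s)).2]) s)
  have h₂ := valQ_le_add (s := s) (qOp_le_add (r := r) (D := D) hγ₂ hγ hδ hCb (V := W) (W := V) hc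
    (fun s => by linarith [(abs_le.1 (h s)).1]) s)
  exact abs_le.2 ⟨by unfold vOp; linarith, by unfold vOp; linarith⟩

lemma looV_eq (hγ₂ : 1 / 2 ≤ γ) (hγ : γ < 1) (hδ : δ ∈ Set.Ioo (0 : ℝ) 1) (hCb : 0 ≤ Cb)
    (s : 𝒮) (u : ℝ) :
    Function.update (vOp γ δ Cb r D (looV γ δ Cb r D s u)) s u = looV γ δ Cb r D s u := by
  refine IsContr.fixPt_eq (γ := γ) (F := looOp γ δ Cb r D s u) (fun V W c h s' => ?_)
    (by linarith) hγ
  rcases eq_or_ne s' s with rfl | hs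
  · simp only [looOp, Function.update_self, sub_self, abs_zero]
    exact mul_nonneg (by linarith) ((abs_nonneg _).trans (h s'))
  · simp only [looOp, Function.update_of_ne hs]
    exact isContr_vOp hγ₂ hγ hδ hCb V W c h s'

lemma looV_mem (hγ₂ : 1 / 2 ≤ γ) (hγ : γ < 1) (hδ : δ ∈ Set.Ioo (0 : ℝ) 1) (hCb : 0 ≤ Cb)
    (hr : IsReward r) (s : 𝒮) {u : ℝ} (hu : u ∈ Set.Icc 0 (1 / (1 - γ))) (s' : 𝒮) :
    looV γ δ Cb r D s u s' ∈ Set.Icc 0 (1 / (1 - γ)) := by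
  rw [← looV_eq hγ₂ hγ hδ hCb]
  rcases eq_or_ne s' s with rfl | hs
  · rwa [Function.update_self]
  · rw [Function.update_of_ne hs]
    exact vOp_mem hγ₂ hγ hr _ _

lemma looV_setNext {i : Fin N} (s : 𝒮) (u : ℝ) (y : 𝒮) (h : (D i).1 = s) :
    looV γ δ Cb r (setNext D i y) s u = looV γ δ Cb r D s u := by
  unfold looV
  congr 1
  funext V s'
  rcases eq_or_ne s' s with rfl | hs
  · simp [looOp]
  · simp only [looOp, Function.update_of_ne hs, vOp, valQ]
    have : ∀ a b, qOp γ δ Cb r (setNext D i y) V s' a b = qOp γ δ Cb r D V s' a b := by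
      intro a b
      have hP := Phat_setNext (D := D) (i := i) (s := s') y (by rw [h]; exact hs.symm) a b
      simp only [qOp, rhat, cnt_setNext, hP]
    rw [show qOp γ δ Cb r (setNext D i y) V s' = qOp γ δ Cb r D V s' from
      funext fun a => funext fun b => this a b]

/-- Freezing at `u` instead of the true value moves the fixed point by at most the error. -/
lemma abs_looV_sub_le (hγ₂ : 1 / 2 ≤ γ) (hγ : γ < 1) (hδ : δ ∈ Set.Ioo (0 : ℝ) 1) (hCb : 0 ≤ Cb)
    {V : 𝒮 → ℝ} (hV : vOp γ δ Cb r D V = V) (s : 𝒮) (u : ℝ) (s' : 𝒮) :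
    |looV γ δ Cb r D s u s' - V s'| ≤ |u - V s| := by
  refine abs_sub_le_of_self_bound hγ (fun e he s' => ?_) (abs_nonneg _) s'
  rw [← looV_eq hγ₂ hγ hδ hCb]
  rcases eq_or_ne s' s with rfl | hs
  · rw [Function.update_self]
    exact le_max_right _ _
  · rw [Function.update_of_ne hs]
    conv_lhs => rw [← hV]
    exact le_max_of_le_left (isContr_vOp hγ₂ hγ hδ hCb _ _ _ he s')

lemma vOp_iterate_mem (hγ₂ : 1 / 2 ≤ γ) (hγ : γ < 1) (hr : IsReward r) (t : ℕ) (s : 𝒮) :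
    (vOp γ δ Cb r D)^[t] (fun _ => 0) s ∈ Set.Icc 0 (1 / (1 - γ)) := by
  cases t with
  | zero => exact ⟨le_rfl, one_div_nonneg.2 (sub_nonneg.2 hγ.le)⟩
  | succ t =>
    rw [Function.iterate_succ_apply']
    exact vOp_mem hγ₂ hγ hr _ _

lemma valQ_TpeMinus_iterate (hγ₂ : 1 / 2 ≤ γ) (hγ : γ < 1) (hr : IsReward r) (t : ℕ) :
    valQ ((TpeMinus γ δ Cb N (cnt D) (Phat D) (rhat r D))^[t] fun _ _ _ => 0)
      = (vOp γ δ Cb r D)^[t] fun _ => 0 := by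
  induction t with
  | zero => exact funext fun s => valQ_const 0 s
  | succ t ih =>
    rw [Function.iterate_succ_apply', Function.iterate_succ_apply', vOp]
    congr 1
    funext s a b
    rw [qOp, clipV_eq (vOp_iterate_mem hγ₂ hγ hr t), TpeMinus, ih]

lemma TpeMinus_iterate_succ (hγ₂ : 1 / 2 ≤ γ) (hγ : γ < 1) (hr : IsReward r) (t : ℕ) :
    (TpeMinus γ δ Cb N (cnt D) (Phat D) (rhat r D))^[t + 1] (fun _ _ _ => 0)
      = qOp γ δ Cb r D ((vOp γ δ Cb r D)^[t] fun _ => 0) := by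
  rw [Function.iterate_succ_apply']
  funext s a b
  rw [qOp, clipV_eq (vOp_iterate_mem hγ₂ hγ hr t), TpeMinus, valQ_TpeMinus_iterate hγ₂ hγ hr]

lemma pow_Titer_mul_le (hγ₂ : 1 / 2 ≤ γ) (hγ : γ < 1) (hN : 1 ≤ N) :
    γ ^ Titer γ N * (1 / (1 - γ)) ≤ 1 / N := by
  have hN' : (0 : ℝ) < N := by exact_mod_cast hN
  have hγ₀ : 0 < γ := by linarith
  have hγ' : 0 < 1 - γ := sub_pos.2 hγ
  have hlog : 0 < Real.log (1 / γ) := Real.log_pos (by rw [lt_div_iff₀ hγ₀]; linarith)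
  have hT : Real.log ((N : ℝ) / (1 - γ)) / Real.log (1 / γ) ≤ Titer γ N := Nat.le_ceil _
  rw [div_le_iff₀ hlog, ← Real.log_pow,
    Real.log_le_log_iff (by positivity) (by positivity), one_div, inv_pow] at hT
  have hp : 0 < γ ^ Titer γ N := by positivity
  rw [div_le_iff₀ hγ', inv_mul_eq_div, le_div_iff₀ hp] at hT
  rw [mul_one_div, div_le_div_iff₀ hγ' hN']
  linarith

lemma Titer_ne_zero (hγ₂ : 1 / 2 ≤ γ) (hγ : γ < 1) (hN : 1 ≤ N) : Titer γ N ≠ 0 := by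
  have hN' : (1 : ℝ) ≤ N := by exact_mod_cast hN
  have hγ₀ : 0 < γ := by linarith
  have hγ' : 0 < 1 - γ := sub_pos.2 hγ
  have hlog : 0 < Real.log (1 / γ) := Real.log_pos (by rw [lt_div_iff₀ hγ₀]; linarith)
  have hlog' : 0 < Real.log ((N : ℝ) / (1 - γ)) :=
    Real.log_pos (by rw [lt_div_iff₀ hγ']; linarith)
  exact (Nat.ceil_pos.2 (div_pos hlog' hlog)).ne'

end operator

/-! ### The good event -/

/-- The self-normalized deviation of the empirical mean of `W` at `(s, a, b)`. -/
def devStat (p W : 𝒮 → ℝ) (t : ℝ) {N : ℕ} (D : Fin N → 𝒮 × 𝒜 × ℬ × 𝒮) (s : 𝒮) (a : 𝒜)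
    (b : ℬ) : ℝ :=
  cnt D s a b * (t * (Pexp p W - Pexp (Phat D s a b) W)
    - t ^ 2 * (varP (Phat D s a b) W + (Pexp p W - Pexp (Phat D s a b) W) ^ 2))

lemma exp_devStat [Nonempty 𝒮] {N : ℕ} {D : Fin N → 𝒮 × 𝒜 × ℬ × 𝒮} {s : 𝒮} {a : 𝒜} {b : ℬ}
    (h : cnt D s a b ≠ 0) (p W : 𝒮 → ℝ) (t : ℝ) :
    Real.exp (devStat p W t D s a b)
      = ∏ i, if IsAt D s a b i then
          Real.exp (t * (Pexp p W - W (D i).2.2.2) - (t * (Pexp p W - W (D i).2.2.2)) ^ 2)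
        else 1 := by
  have hp := Phat_mem_stdSimplex D s a b
  have e : devStat p W t D s a b = ∑ i, if IsAt D s a b i then
      t * (Pexp p W - W (D i).2.2.2) - (t * (Pexp p W - W (D i).2.2.2)) ^ 2 else 0 := by
    rw [← cnt_mul_Pexp_Phat h fun y => t * (Pexp p W - W y) - (t * (Pexp p W - W y)) ^ 2, devStat]
    congr 1
    have h₁ := Pexp_sq_sub hp W (Pexp p W)
    have h₂ : ∀ m, Pexp (Phat D s a b) (fun y => t * (m - W y) - (t * (m - W y)) ^ 2)
        = t * (m * ∑ y, Phat D s a b y - Pexp (Phat D s a b) W)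
          - t ^ 2 * Pexp (Phat D s a b) (fun y => (W y - m) ^ 2) := by
      intro m
      simp only [Pexp, Finset.mul_sum, ← Finset.sum_sub_distrib]
      exact Finset.sum_congr rfl fun y _ => by ring
    rw [h₂, hp.2, h₁]
    ring
  rw [e, Real.exp_sum]
  refine Finset.prod_congr rfl fun i _ => ?_
  split_ifs <;> simp

section event

variable [Nonempty 𝒮] [Nonempty 𝒜] [Nonempty ℬ] {γ δ Cb : ℝ} {r d : 𝒮 → 𝒜 → ℬ → ℝ}
  {P : 𝒮 → 𝒜 → ℬ → 𝒮 → ℝ} {N : ℕ}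

lemma sum_dsWeight_mul_exp_devStat_le (hγ₂ : 1 / 2 ≤ γ) (hγ : γ < 1) (hδ : δ ∈ Set.Ioo (0 : ℝ) 1)
    (hCb : 0 ≤ Cb) (hr : IsReward r) (hd : IsDist3 d) (hP : IsKernel P) (s : 𝒮) (a : 𝒜) (b : ℬ)
    {t u : ℝ} (ht : 0 ≤ t) (htH : t * (1 / (1 - γ)) ≤ 1 / 4)
    (hu : u ∈ Set.Icc 0 (1 / (1 - γ))) :
    ∑ D : Fin N → 𝒮 × 𝒜 × ℬ × 𝒮, dsWeight d P D * (cnt D s a b *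
        Real.exp (devStat (P s a b) (looV γ δ Cb r D s u) t D s a b))
      ≤ ∑ D : Fin N → 𝒮 × 𝒜 × ℬ × 𝒮, dsWeight d P D * cnt D s a b := by
  have key := sum_dsWeight_mul_prod_le (N := N) hd hP s a b (h := fun D => cnt D s a b)
    (g := fun D y => Real.exp (t * (Pexp (P s a b) (looV γ δ Cb r D s u) - looV γ δ Cb r D s u y)
      - (t * (Pexp (P s a b) (looV γ δ Cb r D s u) - looV γ δ Cb r D s u y)) ^ 2))
    (fun D => Nat.cast_nonneg _) (fun D y => (Real.exp_pos _).le)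
    (fun D i y => by rw [cnt_setNext])
    (fun D i y hi => by rw [looV_setNext s u y hi.1])
    (fun D => sum_mul_exp_sub_sq_le (hP s a b) (looV_mem hγ₂ hγ hδ hCb hr s hu) ht htH)
    Finset.univ
  refine le_trans (le_of_eq (Finset.sum_congr rfl fun D _ => ?_)) key
  by_cases h : cnt D s a b = 0
  · simp [h]
  · rw [exp_devStat h]

/-- All deviations of the frozen value functions are controlled over the grids of
exponents and frozen values. -/
def IsGood (γ δ Cb : ℝ) (r : 𝒮 → 𝒜 → ℬ → ℝ) (P : 𝒮 → 𝒜 → ℬ → 𝒮 → ℝ) {N : ℕ}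
    (D : Fin N → 𝒮 × 𝒜 × ℬ × 𝒮) : Prop :=
  ∀ s a b, cnt D s a b ≠ 0 → ∀ k < N, ∀ m < ⌊2 * N * (1 / (1 - γ))⌋₊ + 1,
    devStat (P s a b) (looV γ δ Cb r D s (m / (2 * N))) (1 / (4 * (1 / (1 - γ)) * (k + 1))) D s a b
      ≤ 4 * Real.log (N / ((1 - γ) * δ))

lemma one_le_sum_of_not_isGood {D : Fin N → 𝒮 × 𝒜 × ℬ × 𝒮} (h : ¬ IsGood γ δ Cb r P D) :
    1 ≤ ∑ s, ∑ a, ∑ b, ∑ k ∈ Finset.range N, ∑ m ∈ Finset.range (⌊2 * N * (1 / (1 - γ))⌋₊ + 1),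
      Real.exp (-(4 * Real.log (N / ((1 - γ) * δ)))) * (cnt D s a b *
        Real.exp (devStat (P s a b) (looV γ δ Cb r D s (m / (2 * N)))
          (1 / (4 * (1 / (1 - γ)) * (k + 1))) D s a b)) := by
  simp only [IsGood, not_forall, not_le] at h
  obtain ⟨s, a, b, hc, k, hk, m, hm, hlt⟩ := h
  have hc' : (1 : ℝ) ≤ cnt D s a b := by exact_mod_cast Nat.one_le_iff_ne_zero.2 hc
  refine le_trans ?_ (Finset.single_le_sum (fun s _ => ?_) (Finset.mem_univ s))
  · refine le_trans ?_ (Finset.single_le_sum (fun a _ => ?_) (Finset.mem_univ a))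
    · refine le_trans ?_ (Finset.single_le_sum (fun b _ => ?_) (Finset.mem_univ b))
      · refine le_trans ?_ (Finset.single_le_sum (fun k _ => ?_) (Finset.mem_range.2 hk))
        · refine le_trans ?_ (Finset.single_le_sum (fun m _ => ?_) (Finset.mem_range.2 hm))
          · rw [mul_left_comm, ← Real.exp_add]
            refine one_le_mul_of_one_le_of_one_le hc' (Real.one_le_exp ?_)
            linarith
          · positivity
        · positivity
      · positivity
    · positivity
  · positivity

lemma exp_mul_card_le (hγ₂ : 1 / 2 ≤ γ) (hγ : γ < 1) (hδ : δ ∈ Set.Ioo (0 : ℝ) 1) (hN : 1 ≤ N) :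
    Real.exp (-(4 * Real.log (N / ((1 - γ) * δ))))
      * (N * N * (⌊2 * N * (1 / (1 - γ))⌋₊ + 1)) ≤ δ := by
  have hN' : (1 : ℝ) ≤ N := by exact_mod_cast hN
  have hγ' : 0 < 1 - γ := sub_pos.2 hγ
  obtain ⟨hδ₀, hδ₁⟩ := hδ
  set x : ℝ := N * (1 / (1 - γ)) with hx
  have hH : 2 ≤ 1 / (1 - γ) := by rw [le_div_iff₀ hγ']; linarith
  have hNx : 2 * (N : ℝ) ≤ x := by nlinarith
  have hx₂ : 2 ≤ x := by linarith
  have hfl : (⌊2 * N * (1 / (1 - γ))⌋₊ : ℝ) ≤ 2 * x :=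
    (Nat.floor_le (by positivity)).trans_eq (by rw [hx]; ring)
  have he : Real.exp (-(4 * Real.log (N / ((1 - γ) * δ)))) = (δ / x) ^ 4 := by
    have hpos : 0 < (N : ℝ) / ((1 - γ) * δ) := by positivity
    rw [Real.exp_neg, show (4 : ℝ) = ((4 : ℕ) : ℝ) by norm_num, ← Real.log_pow,
      Real.exp_log (by positivity), ← inv_pow, hx]
    congr 1
    field_simp
  rw [he, div_pow, div_mul_eq_mul_div, div_le_iff₀ (by positivity)]
  have h₁ : δ ^ 4 ≤ δ := pow_le_of_le_one hδ₀.le hδ₁.le (by norm_num)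
  have h₂ : (N : ℝ) * N * (⌊2 * N * (1 / (1 - γ))⌋₊ + 1) ≤ x ^ 4 := by
    calc (N : ℝ) * N * (⌊2 * N * (1 / (1 - γ))⌋₊ + 1) ≤ (x / 2) * (x / 2) * (2 * x + x) := by
          gcongr <;> linarith
      _ ≤ x ^ 4 := by nlinarith [pow_pos (show 0 < x by linarith) 3]
  gcongr

lemma sum_dsWeight_not_isGood_le (hγ₂ : 1 / 2 ≤ γ) (hγ : γ < 1) (hδ : δ ∈ Set.Ioo (0 : ℝ) 1)
    (hCb : 0 ≤ Cb) (hr : IsReward r) (hd : IsDist3 d) (hP : IsKernel P) :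
    ∑ D : Fin N → 𝒮 × 𝒜 × ℬ × 𝒮, {D | ¬ IsGood γ δ Cb r P D}.indicator (dsWeight d P) D ≤ δ := by
  have hγ' : 0 < 1 - γ := sub_pos.2 hγ
  have hH : 0 < 1 / (1 - γ) := one_div_pos.2 hγ'
  rcases Nat.eq_zero_or_pos N with rfl | hN
  · refine le_trans (le_of_eq (Finset.sum_eq_zero fun D _ => ?_)) hδ.1.le
    refine Set.indicator_of_notMem (not_not_intro ?_) _
    exact fun s a b _ k hk => absurd hk (Nat.not_lt_zero k)
  have hN' : (0 : ℝ) < N := by exact_mod_cast hN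
  set M := ⌊2 * N * (1 / (1 - γ))⌋₊ + 1 with hM
  set ε := Real.exp (-(4 * Real.log (N / ((1 - γ) * δ)))) with hε
  have hu : ∀ m ∈ Finset.range M, (m : ℝ) / (2 * N) ∈ Set.Icc 0 (1 / (1 - γ)) := by
    intro m hm
    have h₁ : (m : ℝ) ≤ ⌊2 * N * (1 / (1 - γ))⌋₊ := by
      exact_mod_cast Nat.lt_succ_iff.1 (Finset.mem_range.1 hm)
    refine ⟨by positivity, (div_le_iff₀ (by positivity)).2 ?_⟩
    have h₂ := Nat.floor_le (show 0 ≤ 2 * N * (1 / (1 - γ)) by positivity)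
    linarith
  have ht : ∀ k : ℕ, 1 / (4 * (1 / (1 - γ)) * ((k : ℝ) + 1)) * (1 / (1 - γ)) ≤ 1 / 4 := by
    intro k
    have hk : (0 : ℝ) < k + 1 := by positivity
    rw [div_mul_eq_mul_div, div_le_div_iff₀ (by positivity) (by norm_num)]
    nlinarith [Nat.cast_nonneg (α := ℝ) k]
  calc ∑ D : Fin N → 𝒮 × 𝒜 × ℬ × 𝒮, {D | ¬ IsGood γ δ Cb r P D}.indicator (dsWeight d P) D
      ≤ ∑ D : Fin N → 𝒮 × 𝒜 × ℬ × 𝒮, dsWeight d P D *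
          ∑ s, ∑ a, ∑ b, ∑ k ∈ Finset.range N, ∑ m ∈ Finset.range M,
            ε * (cnt D s a b * Real.exp (devStat (P s a b) (looV γ δ Cb r D s (m / (2 * N)))
              (1 / (4 * (1 / (1 - γ)) * (k + 1))) D s a b)) := by
        refine Finset.sum_le_sum fun D _ => ?_
        have hw := dsWeight_nonneg hd hP D
        refine Set.indicator_le' (g := fun D => dsWeight d P D *
          ∑ s, ∑ a, ∑ b, ∑ k ∈ Finset.range N, ∑ m ∈ Finset.range M,
            ε * (cnt D s a b * Real.exp (devStat (P s a b) (looV γ δ Cb r D s (m / (2 * N)))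
              (1 / (4 * (1 / (1 - γ)) * (k + 1))) D s a b))) (fun D hD => ?_) (fun D _ => ?_) D
        · exact le_mul_of_one_le_right (dsWeight_nonneg hd hP D) (one_le_sum_of_not_isGood hD)
        · exact mul_nonneg (dsWeight_nonneg hd hP D) (by positivity)
    _ = ∑ s, ∑ a, ∑ b, ∑ k ∈ Finset.range N, ∑ m ∈ Finset.range M,
          ε * ∑ D : Fin N → 𝒮 × 𝒜 × ℬ × 𝒮, dsWeight d P D * (cnt D s a b *
            Real.exp (devStat (P s a b) (looV γ δ Cb r D s (m / (2 * N)))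
              (1 / (4 * (1 / (1 - γ)) * (k + 1))) D s a b)) := by
        simp only [Finset.mul_sum]
        rw [Finset.sum_comm]
        refine Finset.sum_congr rfl fun s _ => ?_
        rw [Finset.sum_comm]
        refine Finset.sum_congr rfl fun a _ => ?_
        rw [Finset.sum_comm]
        refine Finset.sum_congr rfl fun b _ => ?_
        rw [Finset.sum_comm]
        refine Finset.sum_congr rfl fun k _ => ?_
        rw [Finset.sum_comm]
        refine Finset.sum_congr rfl fun m _ => Finset.sum_congr rfl fun D _ => ?_
        ring
    _ ≤ ∑ s, ∑ a, ∑ b, ∑ k ∈ Finset.range N, ∑ m ∈ Finset.range M,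
          ε * ∑ D : Fin N → 𝒮 × 𝒜 × ℬ × 𝒮, dsWeight d P D * cnt D s a b := by
        refine Finset.sum_le_sum fun s _ => Finset.sum_le_sum fun a _ => Finset.sum_le_sum fun b _ =>
          Finset.sum_le_sum fun k _ => Finset.sum_le_sum fun m hm =>
            mul_le_mul_of_nonneg_left ?_ (Real.exp_pos _).le
        exact sum_dsWeight_mul_exp_devStat_le hγ₂ hγ hδ hCb hr hd hP s a b (by positivity)
          (ht k) (hu m hm)
    _ = ε * (N * M) * ∑ D : Fin N → 𝒮 × 𝒜 × ℬ × 𝒮, dsWeight d P D *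
          ((∑ s, ∑ a, ∑ b, cnt D s a b : ℕ) : ℝ) := by
        simp only [Finset.sum_const, Finset.card_range, nsmul_eq_mul]
        push_cast
        simp only [Finset.mul_sum]
        symm
        rw [Finset.sum_comm]
        refine Finset.sum_congr rfl fun s _ => ?_
        rw [Finset.sum_comm]
        refine Finset.sum_congr rfl fun a _ => ?_
        rw [Finset.sum_comm]
        refine Finset.sum_congr rfl fun b _ => Finset.sum_congr rfl fun D _ => ?_
        ring
    _ = ε * (N * N * (⌊2 * N * (1 / (1 - γ))⌋₊ + 1)) := by
        simp only [sum_cnt, ← Finset.sum_mul]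
        rw [sum_dsWeight hd hP, hM]
        push_cast
        ring
    _ ≤ δ := exp_mul_card_le hγ₂ hγ hδ hN

lemma one_sub_le_dsProb (hγ₂ : 1 / 2 ≤ γ) (hγ : γ < 1) (hδ : δ ∈ Set.Ioo (0 : ℝ) 1)
    (hCb : 0 ≤ Cb) (hr : IsReward r) (hd : IsDist3 d) (hP : IsKernel P)
    {E : Set (Fin N → 𝒮 × 𝒜 × ℬ × 𝒮)} (hE : ∀ D, IsGood γ δ Cb r P D → D ∈ E) :
    1 - δ ≤ dsProb d P E := by
  have h := sum_dsWeight_not_isGood_le (N := N) hγ₂ hγ hδ hCb hr hd hP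
  rw [← sum_dsWeight (N := N) hd hP, dsProb]
  have h' : ∑ D : Fin N → 𝒮 × 𝒜 × ℬ × 𝒮, dsWeight d P D
      ≤ ∑ D : Fin N → 𝒮 × 𝒜 × ℬ × 𝒮, E.indicator (dsWeight d P) D
        + ∑ D : Fin N → 𝒮 × 𝒜 × ℬ × 𝒮,
            {D | ¬ IsGood γ δ Cb r P D}.indicator (dsWeight d P) D := by
    rw [← Finset.sum_add_distrib]
    refine Finset.sum_le_sum fun D _ => ?_
    have hw := dsWeight_nonneg hd hP D
    by_cases hD : IsGood γ δ Cb r P D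
    · rw [Set.indicator_of_mem (hE D hD)]
      linarith [Set.indicator_nonneg (s := {D | ¬ IsGood γ δ Cb r P D})
        (fun D _ => dsWeight_nonneg hd hP D) D]
    · rw [Set.indicator_of_mem (s := {D | ¬ IsGood γ δ Cb r P D}) hD]
      linarith [Set.indicator_nonneg (s := E) (fun D _ => dsWeight_nonneg hd hP D) D]
  linarith

end event

/-! ### The one-step lower bound -/

lemma four_sqrt_add_le_max {x v v' H L n : ℝ} (hv : 0 ≤ v)
    (hvv : v' ≤ 2 * v + 2 * (3 / (2 * n)) ^ 2) (hH : 2 ≤ H) (hL : 1 / 2 ≤ L) (hn : 1 ≤ n)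
    (hx : x ≤ 4 * √(4 * L * v' / n) + 8 * (H * (4 * L) / n)) :
    x ≤ max (√(1024 * L * v / n)) (2 * 1024 * (H * L / n)) := by
  have hn₀ : 0 < n := by linarith
  have hL₀ : 0 < L := by linarith
  set w := √(L * v / n) with hw
  have hw₀ : 0 ≤ w := Real.sqrt_nonneg _
  have hw₂ : w ^ 2 = L * v / n := Real.sq_sqrt (by positivity)
  have h₁ : √(1024 * L * v / n) = 32 * w := by
    rw [show 1024 * L * v / n = 32 ^ 2 * (L * v / n) by ring,
      Real.sqrt_mul (by positivity), Real.sqrt_sq (by norm_num)]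
  have hLn : 0 < L / n := by positivity
  have h₂ : √(4 * L * v' / n) ≤ 3 * w + 6 * (L / n) := by
    refine Real.sqrt_le_iff.2 ⟨by positivity, ?_⟩
    have h₃ : 4 * L * v' / n ≤ 4 * L * (2 * v + 2 * (3 / (2 * n)) ^ 2) / n := by gcongr
    have h₄ : 4 * L * (2 * v + 2 * (3 / (2 * n)) ^ 2) / n = 8 * w ^ 2 + 18 * (L / n ^ 3) := by
      rw [hw₂]
      field_simp
      ring
    have h₅ : L / n ^ 3 ≤ 2 * (L / n) ^ 2 := by
      rw [div_pow, ← mul_div_assoc, div_le_div_iff₀ (by positivity) (by positivity)]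
      have : L * n ^ 2 ≤ (2 * L ^ 2) * n ^ 3 := by
        gcongr ?_ * ?_
        · nlinarith
        · exact pow_le_pow_right₀ hn (by norm_num)
      linarith
    nlinarith [mul_nonneg hw₀ hLn.le]
  have h₆ : 2 * (L / n) ≤ H * L / n := by
    rw [mul_div_assoc]
    gcongr
  have h₇ : 8 * (H * (4 * L) / n) = 32 * (H * L / n) := by ring
  rw [h₁]
  have := le_max_left (32 * w) (2 * 1024 * (H * L / n))
  have := le_max_right (32 * w) (2 * 1024 * (H * L / n))
  linarith

section lowerBound

variable [Nonempty 𝒮] [Nonempty 𝒜] [Nonempty ℬ] {γ δ Cb : ℝ} {r : 𝒮 → 𝒜 → ℬ → ℝ}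
  {P : 𝒮 → 𝒜 → ℬ → 𝒮 → ℝ} {N : ℕ} {D : Fin N → 𝒮 × 𝒜 × ℬ × 𝒮}

lemma half_le_log (hγ₂ : 1 / 2 ≤ γ) (hγ : γ < 1) (hδ : δ ∈ Set.Ioo (0 : ℝ) 1) (hN : 1 ≤ N) :
    1 / 2 ≤ Real.log (N / ((1 - γ) * δ)) := by
  have hN' : (1 : ℝ) ≤ N := by exact_mod_cast hN
  have h₀ : 0 < (1 - γ) * δ := mul_pos (sub_pos.2 hγ) hδ.1
  have h₂ : 2 ≤ N / ((1 - γ) * δ) := by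
    rw [le_div_iff₀ h₀]
    nlinarith [hδ.1, hδ.2]
  have := Real.log_le_log (by norm_num) h₂
  linarith [Real.log_two_gt_d9]

lemma cnt_le (D : Fin N → 𝒮 × 𝒜 × ℬ × 𝒮) (s : 𝒮) (a : 𝒜) (b : ℬ) : cnt D s a b ≤ N :=
  (Finset.card_le_univ _).trans_eq (Fintype.card_fin N)

lemma abs_Pexp_sub_le {p V W : 𝒮 → ℝ} {c : ℝ} (hp : p ∈ stdSimplex ℝ 𝒮)
    (h : ∀ s, |V s - W s| ≤ c) : |Pexp p V - Pexp p W| ≤ c := by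
  rw [← Pexp_sub]
  exact abs_le.2 ⟨le_Pexp hp fun s => (abs_le.1 (h s)).1, Pexp_le hp fun s => (abs_le.1 (h s)).2⟩

/-- On the good event, the transition error at any value function within `1/N` of the fixed
point of the pessimistic operator is dominated by the penalty. -/
lemma Pexp_sub_le_penalty (hγ₂ : 1 / 2 ≤ γ) (hγ : γ < 1) (hδ : δ ∈ Set.Ioo (0 : ℝ) 1)
    (hr : IsReward r) (hP : IsKernel P) (hD : IsGood γ δ 1024 r P D) {s : 𝒮} {a : 𝒜} {b : ℬ}
    (hc : cnt D s a b ≠ 0) {V : 𝒮 → ℝ} (hV : ∀ s, V s ∈ Set.Icc 0 (1 / (1 - γ)))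
    (hVN : ∀ s, |V s - fixPt (vOp γ δ 1024 r D) s| ≤ 1 / N) :
    Pexp (P s a b) V - Pexp (Phat D s a b) V
      ≤ penalty γ δ 1024 N (cnt D s a b) (Phat D s a b) V - 1 / N := by
  have hγ' : 0 < 1 - γ := sub_pos.2 hγ
  set H := 1 / (1 - γ) with hHdef
  have hH : 2 ≤ H := by rw [hHdef, le_div_iff₀ hγ']; linarith
  have hn : (1 : ℝ) ≤ cnt D s a b := by exact_mod_cast Nat.one_le_iff_ne_zero.2 hc
  have hnN : (cnt D s a b : ℝ) ≤ N := by exact_mod_cast cnt_le D s a b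
  have hN : (1 : ℝ) ≤ N := hn.trans hnN
  have hN₀ : (0 : ℝ) < N := by linarith
  have hL := half_le_log hγ₂ hγ hδ (by exact_mod_cast hN : 1 ≤ N)
  set L := Real.log (N / ((1 - γ) * δ)) with hLdef
  have hPh := Phat_mem_stdSimplex D s a b
  have hfix : vOp γ δ 1024 r D (fixPt (vOp γ δ 1024 r D)) = fixPt (vOp γ δ 1024 r D) :=
    (isContr_vOp hγ₂ hγ hδ (by norm_num)).fixPt_eq (by linarith) hγ
  set U := fixPt (vOp γ δ 1024 r D) with hU
  have hUmem : U s ∈ Set.Icc 0 H := by rw [← hfix]; exact vOp_mem hγ₂ hγ hr _ _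
  set m := ⌊2 * N * U s⌋₊ with hm
  have hm₁ : (m : ℝ) ≤ 2 * N * U s := Nat.floor_le (mul_nonneg (by positivity) hUmem.1)
  have hm₂ : 2 * N * U s < m + 1 := Nat.lt_floor_add_one _
  have hmM : m < ⌊2 * N * H⌋₊ + 1 :=
    Nat.lt_succ_of_le (Nat.floor_le_floor (mul_le_mul_of_nonneg_left hUmem.2 (by positivity)))
  have hu₁ : (m : ℝ) / (2 * N) ≤ U s := by rw [div_le_iff₀ (by positivity)]; linarith
  have hu₂ : U s ≤ (m : ℝ) / (2 * N) + 1 / (2 * N) := by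
    rw [← add_div, le_div_iff₀ (by positivity)]; linarith
  have humem : (m : ℝ) / (2 * N) ∈ Set.Icc 0 H := ⟨by positivity, hu₁.trans hUmem.2⟩
  have hNN : 1 / (2 * (N : ℝ)) + 1 / N = 3 / (2 * N) := by field_simp; norm_num
  set W := looV γ δ 1024 r D s (m / (2 * N)) with hW
  have hWmem : ∀ s', W s' ∈ Set.Icc 0 H := looV_mem hγ₂ hγ hδ (by norm_num) hr s humem
  have hWV : ∀ s', |W s' - V s'| ≤ 3 / (2 * N) := by
    intro s'
    have h₁ : |W s' - U s'| ≤ 1 / (2 * N) :=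
      (abs_looV_sub_le hγ₂ hγ hδ (by norm_num) hfix s _ s').trans
        (abs_le.2 ⟨by linarith, by linarith [show 0 < 1 / (2 * (N : ℝ)) by positivity]⟩)
    have h₂ := hVN s'
    rw [abs_sub_comm] at h₂
    exact (abs_sub_le _ (U s') _).trans (by linarith)
  have hdev : Pexp (P s a b) W - Pexp (Phat D s a b) W
      ≤ 4 * √(4 * L * varP (Phat D s a b) W / cnt D s a b) + 8 * (H * (4 * L) / cnt D s a b) := by
    refine le_sqrt_of_forall_grid (by linarith) (varP_nonneg hPh W) (varP_le_sq hPh hWmem)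
      ?_ hn hnN (by linarith) fun k hk => ?_
    · linarith [Pexp_le (hP s a b) fun s => (hWmem s).2, le_Pexp hPh fun s => (hWmem s).1]
    · exact hD s a b hc k hk m hmM
  have hvar : varP (Phat D s a b) W
      ≤ 2 * varP (Phat D s a b) V + 2 * (3 / (2 * (cnt D s a b : ℝ))) ^ 2 :=
    varP_le_two_mul_add hPh fun s' => (hWV s').trans (by gcongr)
  have hmax := four_sqrt_add_le_max (varP_nonneg hPh V) hvar hH hL hn hdev
  have h₁ := (abs_le.1 (abs_Pexp_sub_le (hP s a b) hWV)).1
  have h₂ := (abs_le.1 (abs_Pexp_sub_le hPh hWV)).2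
  have h₃ : 3 / (2 * (N : ℝ)) + 3 / (2 * N) + 1 / N = 4 / N := by field_simp; norm_num
  have h₄ : 2 * 1024 * L / ((1 - γ) * cnt D s a b) = 2 * 1024 * (H * L / cnt D s a b) := by
    rw [hHdef]; field_simp
  have h₅ : 0 < 3 / (2 * (N : ℝ)) := by positivity
  rw [penalty, if_neg hc, ← hLdef, h₄, ← hHdef]
  rcases min_choice (max (√(1024 * L * varP (Phat D s a b) V / cnt D s a b))
    (2 * 1024 * (H * L / cnt D s a b))) H with h | h
  · rw [h]
    linarith
  · rw [h]
    linarith [Pexp_le (hP s a b) fun s => (hV s).2, le_Pexp hPh fun s => (hV s).1]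

/-- On the good event the pessimistic Q-function satisfies a one-step lower bound in terms of
the true model. -/
lemma le_QpeMinus (hγ₂ : 1 / 2 ≤ γ) (hγ : γ < 1) (hδ : δ ∈ Set.Ioo (0 : ℝ) 1)
    (hr : IsReward r) (hP : IsKernel P) (hD : IsGood γ δ 1024 r P D) (s : 𝒮) (a : 𝒜) (b : ℬ) :
    r s a b + γ * Pexp (P s a b) (valQ (QpeMinus γ δ 1024 r D))
      - 2 * penalty γ δ 1024 N (cnt D s a b) (Phat D s a b) (valQ (QpeMinus γ δ 1024 r D))
      ≤ QpeMinus γ δ 1024 r D s a b := by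
  have hγ' : 0 < 1 - γ := sub_pos.2 hγ
  have hH : 1 / (1 - γ) = 1 + γ * (1 / (1 - γ)) := by field_simp; ring
  have hH₀ : 0 < 1 / (1 - γ) := one_div_pos.2 hγ'
  have hVeq : valQ (QpeMinus γ δ 1024 r D) = (vOp γ δ 1024 r D)^[Titer γ N] fun _ => 0 :=
    valQ_TpeMinus_iterate hγ₂ hγ hr _
  have hVmem := vOp_iterate_mem (δ := δ) (Cb := 1024) (D := D) hγ₂ hγ hr (Titer γ N)
  have hPV : ∀ {p : 𝒮 → ℝ}, p ∈ stdSimplex ℝ 𝒮 →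
      Pexp p ((vOp γ δ 1024 r D)^[Titer γ N] fun _ => 0) ≤ 1 / (1 - γ) :=
    fun hp => Pexp_le hp fun s => (hVmem s).2
  rw [hVeq]
  by_cases hc : cnt D s a b = 0
  · have hQ : 0 ≤ QpeMinus γ δ 1024 r D s a b := by
      rw [QpeMinus]
      cases Titer γ N with
      | zero => exact le_rfl
      | succ t =>
        rw [TpeMinus_iterate_succ hγ₂ hγ hr]
        exact (qOp_mem hγ₂ hγ hr _ s a b).1
    rw [penalty, if_pos hc]
    have h₁ := (hr s a b).2
    have h₂ := mul_le_mul_of_nonneg_left (hPV (hP s a b)) (show 0 ≤ γ by linarith)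
    have h₃ : 0 ≤ 4 / (N : ℝ) := by positivity
    linarith
  · have hN : 1 ≤ N := (Nat.one_le_iff_ne_zero.2 hc).trans (cnt_le D s a b)
    have hN₀ : (0 : ℝ) < N := by exact_mod_cast hN
    have hpow := pow_Titer_mul_le hγ₂ hγ hN
    have hcontr := isContr_vOp (r := r) (D := D) hγ₂ hγ hδ (show (0 : ℝ) ≤ 1024 by norm_num)
    have hfix := hcontr.fixPt_eq (by linarith) hγ
    have hclose : ∀ s, |(vOp γ δ 1024 r D)^[Titer γ N] (fun _ => 0) s
        - fixPt (vOp γ δ 1024 r D) s| ≤ 1 / N := by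
      intro s
      have h := hcontr.abs_iterate_sub_le (V := fun _ => 0) (W := fixPt (vOp γ δ 1024 r D))
        (c := 1 / (1 - γ)) (fun s => by
          have := vOp_mem (δ := δ) (Cb := 1024) (D := D) hγ₂ hγ hr (fixPt (vOp γ δ 1024 r D)) s
          rw [hfix] at this
          exact abs_le.2 ⟨by linarith [this.2], by linarith [this.1]⟩) (Titer γ N) s
      rw [Function.iterate_fixed hfix] at h
      exact h.trans hpow
    have hdev := Pexp_sub_le_penalty hγ₂ hγ hδ hr hP hD hc hVmem hclose
    obtain ⟨t, ht⟩ := Nat.exists_eq_succ_of_ne_zero (Titer_ne_zero hγ₂ hγ hN)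
    have hstep : ∀ s, (vOp γ δ 1024 r D)^[Titer γ N] (fun _ => 0) s
        ≤ (vOp γ δ 1024 r D)^[t] (fun _ => 0) s + γ ^ t * (1 / (1 - γ)) := by
      intro s
      have h := hcontr.abs_iterate_sub_le (V := vOp γ δ 1024 r D fun _ => 0) (W := fun _ => 0)
        (c := 1 / (1 - γ)) (fun s => by
          have := vOp_mem (δ := δ) (Cb := 1024) (D := D) hγ₂ hγ hr (fun _ => 0) s
          exact abs_le.2 ⟨by linarith [this.1], by linarith [this.2]⟩) t s
      rw [← Function.iterate_succ_apply, ← ht] at h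
      linarith [(abs_le.1 h).2]
    have hq := qOp_le_add (r := r) (D := D) hγ₂ hγ hδ (show (0 : ℝ) ≤ 1024 by norm_num)
      (mul_nonneg (pow_nonneg (by linarith) t) hH₀.le) hstep s a b
    have hQ : QpeMinus γ δ 1024 r D s a b
        = qOp γ δ 1024 r D ((vOp γ δ 1024 r D)^[t] fun _ => 0) s a b := by
      rw [QpeMinus, ht, Nat.succ_eq_add_one, TpeMinus_iterate_succ hγ₂ hγ hr]
    have hqV : r s a b
        + γ * Pexp (Phat D s a b) ((vOp γ δ 1024 r D)^[Titer γ N] fun _ => 0)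
        - penalty γ δ 1024 N (cnt D s a b) (Phat D s a b)
            ((vOp γ δ 1024 r D)^[Titer γ N] fun _ => 0)
        ≤ qOp γ δ 1024 r D ((vOp γ δ 1024 r D)^[Titer γ N] fun _ => 0) s a b := by
      rw [qOp, clipV_eq hVmem, rhat, if_neg hc]
      exact le_max_left _ _
    have hγt : γ * (γ ^ t * (1 / (1 - γ))) ≤ 1 / N := by
      rw [← mul_assoc, ← pow_succ', ← Nat.succ_eq_add_one t, ← ht]
      exact hpow
    have hpen : 1 / (N : ℝ) ≤ penalty γ δ 1024 N (cnt D s a b) (Phat D s a b)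
          ((vOp γ δ 1024 r D)^[Titer γ N] fun _ => 0) := by
      have h₁ : 0 ≤ √(1024 * Real.log (N / ((1 - γ) * δ)) * varP (Phat D s a b)
        ((vOp γ δ 1024 r D)^[Titer γ N] fun _ => 0) / cnt D s a b) := Real.sqrt_nonneg _
      rw [penalty, if_neg hc]
      have h₂ := le_min (h₁.trans (le_max_left _ (2 * 1024 * Real.log (N / ((1 - γ) * δ))
        / ((1 - γ) * cnt D s a b)))) hH₀.le
      have h₃ : 1 / (N : ℝ) ≤ 4 / N := by gcongr; norm_num
      linarith
    nlinarith

end lowerBound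

end ZSMG


open ZSMG in
/-- Lemma 4: with probability `1−δ`,
`V_pe^− ≥ r^{μ*,ν₀} + γ P^{μ*,ν₀} V_pe^− − 2 β^{μ*,ν₀}` for any minimizing
deterministic policy `ν₀` against `μ*`. -/
theorem statement8 :
    ∃ Cb : ℝ, 0 < Cb ∧
      ∀ (𝒮 𝒜 ℬ : Type) [Fintype 𝒮] [Fintype 𝒜] [Fintype ℬ]
        [DecidableEq 𝒮] [DecidableEq 𝒜] [DecidableEq ℬ]
        [Nonempty 𝒮] [Nonempty 𝒜] [Nonempty ℬ],
      ∀ γ δ : ℝ, 1 / 2 ≤ γ → γ < 1 → δ ∈ Set.Ioo (0 : ℝ) 1 →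
      ∀ P : 𝒮 → 𝒜 → ℬ → 𝒮 → ℝ, IsKernel P →
      ∀ r : 𝒮 → 𝒜 → ℬ → ℝ, IsReward r →
      ∀ db : 𝒮 → 𝒜 → ℬ → ℝ, IsDist3 db →
      ∀ (μs : 𝒮 → 𝒜 → ℝ) (νs : 𝒮 → ℬ → ℝ), IsNashPair γ P r μs νs →
      ∀ N : ℕ,
        1 - δ ≤ dsProb db P {D : Fin N → 𝒮 × 𝒜 × ℬ × 𝒮 |
          ∀ ν₀ : 𝒮 → ℬ,
            (∀ s, ∀ z ∈ stdSimplex ℝ ℬ,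
              (∑ a, μs s a * QpeMinus γ δ Cb r D s a (ν₀ s)) ≤
                ∑ a, ∑ b, μs s a * z b * QpeMinus γ δ Cb r D s a b) →
            ∀ s,
              (∑ a, μs s a * r s a (ν₀ s))
                + γ * (∑ s', (∑ a, μs s a * P s a (ν₀ s) s') *
                    valQ (QpeMinus γ δ Cb r D) s')
                - 2 * (∑ a, μs s a * penalty γ δ Cb N (cnt D s a (ν₀ s))
                    (Phat D s a (ν₀ s)) (valQ (QpeMinus γ δ Cb r D)))
              ≤ valQ (QpeMinus γ δ Cb r D) s} := by
  refine ⟨1024, by norm_num, ?_⟩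
  intro 𝒮 𝒜 ℬ _ _ _ _ _ _ _ _ _ γ δ hγ₂ hγ hδ P hP r hr db hdb μs νs hNash N
  refine one_sub_le_dsProb hγ₂ hγ hδ (by norm_num : (0 : ℝ) ≤ 1024) hr hdb hP
    fun D hD ν₀ hν₀ s => ?_
  refine le_trans ?_ (le_valQ (hNash.1 s) (hν₀ s))
  calc (∑ a, μs s a * r s a (ν₀ s))
        + γ * (∑ s', (∑ a, μs s a * P s a (ν₀ s) s') * valQ (QpeMinus γ δ 1024 r D) s')
        - 2 * (∑ a, μs s a * penalty γ δ 1024 N (cnt D s a (ν₀ s))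
            (Phat D s a (ν₀ s)) (valQ (QpeMinus γ δ 1024 r D)))
      = ∑ a, μs s a * (r s a (ν₀ s)
          + γ * Pexp (P s a (ν₀ s)) (valQ (QpeMinus γ δ 1024 r D))
          - 2 * penalty γ δ 1024 N (cnt D s a (ν₀ s)) (Phat D s a (ν₀ s))
              (valQ (QpeMinus γ δ 1024 r D))) := by
        simp only [mul_sub, mul_add, Finset.sum_sub_distrib, Finset.sum_add_distrib, Pexp,
          Finset.sum_mul, Finset.mul_sum]
        rw [Finset.sum_comm]
        simp only [mul_assoc, mul_left_comm]
    _ ≤ ∑ a, μs s a * QpeMinus γ δ 1024 r D s a (ν₀ s) :=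
        Finset.sum_le_sum fun a _ => mul_le_mul_of_nonneg_left
          (le_QpeMinus hγ₂ hγ hδ hr hP hD s a (ν₀ s)) ((hNash.1 s).1 a)
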